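/- arXiv:2506.02424 — 3 statements merged into one kernel-verified Lean document; each statement's English description precedes it below -/
import Mathlib

section
/- Let k and ℓ be nonnegative integers with k ≤ ℓ, let c ≥ 2, and let ξ be a real number with |ξ| ≤ c. Then |∫_{−1}^{1} x^k P_ℓ(x) e^{iξx} dx| ≤ (4k+2) · (c/2)^{ℓ+k} / Γ(ℓ−k+1). -/
open Real

noncomputable section

/-- The Legendre polynomial of degree `n`, via Rodrigues' formula. -/
def legendreP (n : ℕ) (x : ℝ) : ℝ :=
  (1 / (2 ^ n * (n.factorial : ℝ))) * iteratedDeriv n (fun t : ℝ => (t ^ 2 - 1) ^ n) x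

/-!
By Rodrigues' formula and `ℓ` integrations by parts, integrating `P_ℓ` against `f` over `[-1, 1]`
amounts, up to sign, to integrating `(x ^ 2 - 1) ^ ℓ / (2 ^ ℓ ℓ!)` against `f^(ℓ)`: the boundary
terms vanish because `±1` are zeros of order `ℓ`. For `f x = x ^ k e ^ (ζ x)`, the Leibniz rule
bounds `f^(ℓ)` by a sum over `i ≤ k`, and factoring out of its `i`-th term the binomial weight
`k.choose i / 2 ^ k` leaves a bound that does not depend on `i`.
-/

open Finset
open scoped Nat

section IntegrationByParts

variable {𝕜 : Type*} [NontriviallyNormedField 𝕜] [NormedAlgebra ℝ 𝕜]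
  {E : Type*} [NormedAddCommGroup E] [NormedSpace 𝕜 E] [NormedSpace ℝ E] [CompleteSpace E]
  [IsScalarTower ℝ 𝕜 E]

theorem integral_iteratedDeriv_smul_eq {n : ℕ} {a b : ℝ} {u : ℝ → 𝕜} {v : ℝ → E}
    (hu : ContDiff ℝ n u) (hv : ContDiff ℝ n v)
    (ha : ∀ m < n, iteratedDeriv m u a = 0) (hb : ∀ m < n, iteratedDeriv m u b = 0) :
    ∫ x in a..b, iteratedDeriv n u x • v x =
      (-1 : ℝ) ^ n • ∫ x in a..b, u x • iteratedDeriv n v x := by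
  induction n generalizing v with
  | zero => simp
  | succ n ih =>
    obtain ⟨hv_diff, -, hv_deriv⟩ := contDiff_succ_iff_deriv (n := n).mp (mod_cast hv)
    have hu_diff : Differentiable ℝ (iteratedDeriv n u) :=
      hu.differentiable_iteratedDeriv n (mod_cast n.lt_succ_self)
    have by_parts : ∫ x in a..b, iteratedDeriv (n + 1) u x • v x =
        -∫ x in a..b, iteratedDeriv n u x • deriv v x := by
      rw [intervalIntegral.integral_smul_deriv_eq_deriv_smul (u' := iteratedDeriv (n + 1) u)
        (fun x _ ↦ by simpa [iteratedDeriv_succ] using (hu_diff x).hasDerivAt)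
        (fun x _ ↦ (hv_diff x).hasDerivAt)
        ((hu.continuous_iteratedDeriv' (n + 1)).intervalIntegrable a b)
        (hv_deriv.continuous.intervalIntegrable a b),
        ha n n.lt_succ_self, hb n n.lt_succ_self]
      simp
    rw [by_parts, ih (hu.of_le (mod_cast n.le_succ)) hv_deriv
      (fun m hm ↦ ha m (hm.trans n.lt_succ_self)) (fun m hm ↦ hb m (hm.trans n.lt_succ_self)),
      iteratedDeriv_succ', pow_succ]
    simp

end IntegrationByParts

theorem iteratedDeriv_pow_eq_zero_of_apply_eq_zero {𝕜 : Type*} [NontriviallyNormedField 𝕜]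
    [CharZero 𝕜] [CompleteSpace 𝕜] {f : 𝕜 → 𝕜} {z : 𝕜} (hf : AnalyticAt 𝕜 f z) (hz : f z = 0)
    {m n : ℕ} (hmn : m < n) : iteratedDeriv m (f ^ n) z = 0 := by
  have order_le : n ≤ analyticOrderAt (f ^ n) z := by
    rw [analyticOrderAt_pow hf, nsmul_eq_mul]
    exact le_mul_of_one_le_right' (Order.one_le_iff_ne_zero.mpr (hf.analyticOrderAt_ne_zero.mpr hz))
  exact (natCast_le_analyticOrderAt_iff_iteratedDeriv_eq_zero (hf.pow n)).mp order_le m hmn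

section Legendre

variable {E : Type*} [NormedAddCommGroup E] [NormedSpace ℝ E] [CompleteSpace E]

theorem integral_legendreP_smul {n : ℕ} {f : ℝ → E} (hf : ContDiff ℝ n f) :
    ∫ x in (-1 : ℝ)..1, legendreP n x • f x =
      ((-1) ^ n / (2 ^ n * n ! : ℝ)) •
        ∫ x in (-1 : ℝ)..1, (x ^ 2 - 1) ^ n • iteratedDeriv n f x := by
  have boundary (t : ℝ) (ht : t ^ 2 - 1 = 0) (m : ℕ) (hm : m < n) :
      iteratedDeriv m (fun s : ℝ ↦ (s ^ 2 - 1) ^ n) t = 0 :=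
    iteratedDeriv_pow_eq_zero_of_apply_eq_zero (f := fun s : ℝ ↦ s ^ 2 - 1) (by fun_prop) ht hm
  simp only [legendreP, mul_smul, intervalIntegral.integral_smul]
  rw [integral_iteratedDeriv_smul_eq (by fun_prop) hf
    (boundary (-1) (by norm_num)) (boundary 1 (by norm_num)), smul_smul]
  congr 1
  ring

theorem norm_integral_legendreP_smul_le {n : ℕ} {f : ℝ → E} {C : ℝ} (hf : ContDiff ℝ n f)
    (hC : ∀ x ∈ Set.Icc (-1 : ℝ) 1, ‖iteratedDeriv n f x‖ ≤ C) :
    ‖∫ x in (-1 : ℝ)..1, legendreP n x • f x‖ ≤ 2 * C / (2 ^ n * n !) := by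
  have integrand_le : ∀ x ∈ Set.uIoc (-1 : ℝ) 1,
      ‖(x ^ 2 - 1) ^ n • iteratedDeriv n f x‖ ≤ C := by
    intro x hx
    rw [Set.uIoc_of_le (by norm_num)] at hx
    have weight_le : |x ^ 2 - 1| ≤ 1 := abs_le.mpr ⟨by nlinarith, by nlinarith [hx.1, hx.2]⟩
    rw [norm_smul, norm_pow, Real.norm_eq_abs]
    exact (mul_le_of_le_one_left (norm_nonneg _) (pow_le_one₀ (abs_nonneg _) weight_le)).trans
      (hC x (Set.Ioc_subset_Icc_self hx))
  rw [integral_legendreP_smul hf, norm_smul]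
  calc ‖(-1 : ℝ) ^ n / (2 ^ n * n !)‖ * ‖∫ x in (-1 : ℝ)..1, (x ^ 2 - 1) ^ n • iteratedDeriv n f x‖
      ≤ 1 / (2 ^ n * n !) * (C * |1 - (-1)|) := by
        gcongr
        · simp
        · exact intervalIntegral.norm_integral_le_of_norm_le_const integrand_le
    _ = 2 * C / (2 ^ n * n !) := by norm_num; ring

end Legendre

theorem iteratedDeriv_comp_ofReal {n : ℕ} {f : ℂ → ℂ} (hf : ContDiff ℂ n f) (x : ℝ) :
    iteratedDeriv n (fun t : ℝ ↦ f t) x = iteratedDeriv n f x := by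
  induction n generalizing f with
  | zero => simp
  | succ n ih =>
    obtain ⟨hf_diff, -, hf_deriv⟩ := contDiff_succ_iff_deriv (n := n).mp (mod_cast hf)
    have deriv_comp : deriv (fun t : ℝ ↦ f t) = fun t : ℝ ↦ deriv f t :=
      funext fun t ↦ (hf_diff t).hasDerivAt.comp_ofReal.deriv
    rw [iteratedDeriv_succ', iteratedDeriv_succ', deriv_comp, ih hf_deriv]

theorem norm_iteratedDeriv_pow_mul_cexp_le (k n : ℕ) (ζ z : ℂ) (hz : ‖z‖ ≤ 1) :
    ‖iteratedDeriv n (fun w ↦ w ^ k * Complex.exp (ζ * w)) z‖ ≤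
      (∑ i ∈ range (n + 1), (n.choose i * k.descFactorial i : ℝ) * ‖ζ‖ ^ (n - i)) *
        exp (ζ * z).re := by
  rw [iteratedDeriv_fun_mul (by fun_prop) (by fun_prop), sum_mul]
  refine norm_sum_le_of_le _ fun i _ ↦ ?_
  simp only [iteratedDeriv_pow, iteratedDeriv_cexp_const_mul, norm_mul, norm_pow,
    Complex.norm_natCast, Complex.norm_exp]
  calc (n.choose i : ℝ) * (k.descFactorial i * ‖z‖ ^ (k - i)) *
        (‖ζ‖ ^ (n - i) * exp (ζ * z).re)
      ≤ n.choose i * (k.descFactorial i * 1) * (‖ζ‖ ^ (n - i) * exp (ζ * z).re) := by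
        gcongr
        exact pow_le_one₀ (norm_nonneg z) hz
    _ = n.choose i * k.descFactorial i * ‖ζ‖ ^ (n - i) * exp (ζ * z).re := by ring

theorem norm_integral_pow_mul_legendreP_mul_cexp_le_sum (k n : ℕ) (ζ : ℂ) :
    ‖∫ x in (-1 : ℝ)..1, (x : ℂ) ^ k * legendreP n x * Complex.exp (ζ * x)‖ ≤
      2 * ((∑ i ∈ range (n + 1), (n.choose i * k.descFactorial i : ℝ) * ‖ζ‖ ^ (n - i)) *
        exp |ζ.re|) / (2 ^ n * n !) := by
  have entire : ContDiff ℂ n fun w : ℂ ↦ w ^ k * Complex.exp (ζ * w) := by fun_prop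
  have integrand_eq (x : ℝ) : (x : ℂ) ^ k * legendreP n x * Complex.exp (ζ * x) =
      legendreP n x • ((x : ℂ) ^ k * Complex.exp (ζ * x)) := by
    rw [Complex.real_smul]
    ring
  simp only [integrand_eq]
  refine norm_integral_legendreP_smul_le
    ((entire.restrict_scalars ℝ).comp Complex.ofRealCLM.contDiff) fun x hx ↦ ?_
  have abs_le_one : |x| ≤ 1 := abs_le.mpr hx
  have re_le : (ζ * x).re ≤ |ζ.re| := by
    rw [Complex.re_mul_ofReal]
    exact (le_abs_self _).trans
      ((abs_mul _ _).trans_le (mul_le_of_le_one_right (abs_nonneg _) abs_le_one))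
  rw [iteratedDeriv_comp_ofReal entire]
  refine (norm_iteratedDeriv_pow_mul_cexp_le k n ζ x (by simpa using abs_le_one)).trans ?_
  gcongr

theorem two_pow_mul_factorial_le (m n : ℕ) : 2 ^ m * n ! ≤ (m + 1) * (n + m)! := by
  calc 2 ^ m * n ! ≤ (m + 1)! * n ! := by
        gcongr
        simpa [add_comm] using Nat.factorial_mul_pow_le_factorial (m := 1) (n := m)
    _ = (m + 1) * (n ! * m !) := by rw [Nat.factorial_succ]; ring
    _ ≤ (m + 1) * (n + m)! := by
        gcongr
        exact Nat.le_of_dvd (n + m).factorial_pos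
          (Nat.factorial_mul_factorial_dvd_factorial_add n m)

theorem choose_mul_descFactorial_mul_two_pow_mul_factorial_le {i k ℓ : ℕ} (hik : i ≤ k)
    (hkℓ : k ≤ ℓ) :
    ℓ.choose i * k.descFactorial i * (2 ^ (k - i) * (ℓ - k)!) ≤ (k + 1) * ℓ ! * k.choose i := by
  have factorial_ratio_le : 2 ^ (k - i) * (ℓ - k)! ≤ (k + 1) * (ℓ - i)! := by
    refine (two_pow_mul_factorial_le (k - i) (ℓ - k)).trans ?_
    rw [tsub_add_tsub_cancel hkℓ hik]
    gcongr
    exact k.sub_le i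
  calc ℓ.choose i * k.descFactorial i * (2 ^ (k - i) * (ℓ - k)!)
      ≤ ℓ.choose i * k.descFactorial i * ((k + 1) * (ℓ - i)!) :=
        Nat.mul_le_mul_left _ factorial_ratio_le
    _ = (k + 1) * (ℓ.choose i * i ! * (ℓ - i)!) * k.choose i := by
        rw [Nat.descFactorial_eq_factorial_mul_choose]
        ring
    _ = (k + 1) * ℓ ! * k.choose i := by
        rw [Nat.choose_mul_factorial_mul_factorial (hik.trans hkℓ)]

theorem choose_mul_descFactorial_mul_pow_le {i k ℓ : ℕ} (hkℓ : k ≤ ℓ) {c : ℝ} (hc : 2 ≤ c) :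
    (ℓ.choose i * k.descFactorial i : ℝ) * c ^ (ℓ - i) ≤
      k.choose i / 2 ^ k * (2 ^ ℓ * ℓ ! * ((k + 1) * (c / 2) ^ ℓ / (ℓ - k)!)) := by
  obtain hki | hik := lt_or_ge k i
  · simp [Nat.descFactorial_of_lt hki, Nat.choose_eq_zero_of_lt hki]
  have pow_le : c ^ (ℓ - i) ≤ 2 ^ (ℓ - i) * (c / 2) ^ ℓ := by
    calc c ^ (ℓ - i) = 2 ^ (ℓ - i) * (c / 2) ^ (ℓ - i) := by rw [← mul_pow]; congr 1; ring
      _ ≤ 2 ^ (ℓ - i) * (c / 2) ^ ℓ := by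
        gcongr
        · linarith
        · exact Nat.sub_le ℓ i
  have coeff_le : (ℓ.choose i * k.descFactorial i * (2 ^ (k - i) * (ℓ - k)!) : ℝ) ≤
      (k + 1) * ℓ ! * k.choose i :=
    mod_cast choose_mul_descFactorial_mul_two_pow_mul_factorial_le hik hkℓ
  have two_pow_mul : (2 : ℝ) ^ (ℓ - i) * 2 ^ k = 2 ^ ℓ * 2 ^ (k - i) := by
    rw [← pow_add, ← pow_add]
    congr 1
    lia
  calc (ℓ.choose i * k.descFactorial i : ℝ) * c ^ (ℓ - i)
      ≤ ℓ.choose i * k.descFactorial i * (2 ^ (ℓ - i) * (c / 2) ^ ℓ) := by gcongr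
    _ = ℓ.choose i * k.descFactorial i * (2 ^ (k - i) * (ℓ - k)!) *
          (2 ^ ℓ * (c / 2) ^ ℓ / (2 ^ k * (ℓ - k)!)) := by
        rw [eq_div_of_mul_eq (by positivity) two_pow_mul]
        field_simp
    _ ≤ (k + 1) * ℓ ! * k.choose i * (2 ^ ℓ * (c / 2) ^ ℓ / (2 ^ k * (ℓ - k)!)) := by gcongr
    _ = k.choose i / 2 ^ k * (2 ^ ℓ * ℓ ! * ((k + 1) * (c / 2) ^ ℓ / (ℓ - k)!)) := by field_simp

theorem sum_choose_mul_descFactorial_mul_pow_le {k ℓ : ℕ} (hkℓ : k ≤ ℓ) {c : ℝ} (hc : 2 ≤ c) :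
    ∑ i ∈ range (ℓ + 1), (ℓ.choose i * k.descFactorial i : ℝ) * c ^ (ℓ - i) ≤
      2 ^ ℓ * ℓ ! * ((k + 1) * (c / 2) ^ ℓ / (ℓ - k)!) := by
  have weights_sum : ∑ i ∈ range (ℓ + 1), (k.choose i / 2 ^ k : ℝ) = 1 := by
    rw [eventually_constant_sum (N := k + 1) (fun i hi ↦ by simp [Nat.choose_eq_zero_of_lt hi])
      (by lia), ← sum_div, ← Nat.cast_sum, Nat.sum_range_choose]
    simp
  refine (sum_le_sum fun i _ ↦ choose_mul_descFactorial_mul_pow_le hkℓ hc).trans_eq ?_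
  rw [← sum_mul, weights_sum, one_mul]

theorem norm_integral_pow_mul_legendreP_mul_cexp_le {k ℓ : ℕ} (hkℓ : k ≤ ℓ) {c : ℝ} (hc : 2 ≤ c)
    {ζ : ℂ} (hζ : ‖ζ‖ ≤ c) :
    ‖∫ x in (-1 : ℝ)..1, (x : ℂ) ^ k * legendreP ℓ x * Complex.exp (ζ * x)‖ ≤
      exp |ζ.re| * (2 * (k + 1) * (c / 2) ^ ℓ / (ℓ - k)!) := by
  calc ‖∫ x in (-1 : ℝ)..1, (x : ℂ) ^ k * legendreP ℓ x * Complex.exp (ζ * x)‖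
      ≤ 2 * ((∑ i ∈ range (ℓ + 1), (ℓ.choose i * k.descFactorial i : ℝ) * ‖ζ‖ ^ (ℓ - i)) *
          exp |ζ.re|) / (2 ^ ℓ * ℓ !) := norm_integral_pow_mul_legendreP_mul_cexp_le_sum k ℓ ζ
    _ ≤ 2 * (2 ^ ℓ * ℓ ! * ((k + 1) * (c / 2) ^ ℓ / (ℓ - k)!) * exp |ζ.re|) / (2 ^ ℓ * ℓ !) := by
        gcongr
        refine le_trans ?_ (sum_choose_mul_descFactorial_mul_pow_le hkℓ hc)
        gcongr
    _ = exp |ζ.re| * (2 * (k + 1) * (c / 2) ^ ℓ / (ℓ - k)!) := by field_simp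

theorem legendre_oscillatory_integral_bound_general (k ℓ : ℕ) (hkℓ : k ≤ ℓ)
    (c : ℝ) (hc : 2 ≤ c) (ξ : ℂ) (hξ : ‖ξ‖ ≤ c) :
    ‖∫ x in (-1 : ℝ)..1,
        (x : ℂ) ^ k * (legendreP ℓ x : ℂ) * Complex.exp (Complex.I * ξ * (x : ℂ))‖ ≤
      exp |ξ.im| *
        ((4 * (k : ℝ) + 2) * (c / 2) ^ (ℓ + k) / Real.Gamma ((ℓ : ℝ) - (k : ℝ) + 1)) := by
  rw [← Nat.cast_sub hkℓ, Real.Gamma_nat_eq_factorial]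
  calc ‖∫ x in (-1 : ℝ)..1, (x : ℂ) ^ k * legendreP ℓ x * Complex.exp (Complex.I * ξ * x)‖
      ≤ exp |ξ.im| * (2 * (k + 1) * (c / 2) ^ ℓ / (ℓ - k)!) := by
        simpa using norm_integral_pow_mul_legendreP_mul_cexp_le (ζ := Complex.I * ξ) hkℓ hc
          (by simpa using hξ)
    _ ≤ exp |ξ.im| * ((4 * k + 2) * (c / 2) ^ (ℓ + k) / (ℓ - k)!) := by
        have one_le_half_c : 1 ≤ c / 2 := by linarith
        gcongr
        · linarith
        · exact Nat.le_add_right ℓ k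

/-- For `k ≤ ℓ`, `c ≥ 2` and `|ξ| ≤ c`,
`|∫_{-1}^{1} x^k P_ℓ(x) e^{iξx} dx| ≤ (4k+2) (c/2)^{ℓ+k} / Γ(ℓ-k+1)`. -/
theorem legendre_oscillatory_integral_bound (k ℓ : ℕ) (hkℓ : k ≤ ℓ)
    (c : ℝ) (hc : 2 ≤ c) (ξ : ℝ) (hξ : |ξ| ≤ c) :
    ‖∫ x in (-1 : ℝ)..1,
        (x : ℂ) ^ k * (legendreP ℓ x : ℂ) * Complex.exp (Complex.I * (ξ : ℂ) * (x : ℂ))‖ ≤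
      (4 * (k : ℝ) + 2) * (c / 2) ^ (ℓ + k) / Real.Gamma ((ℓ : ℝ) - (k : ℝ) + 1) := by
  simpa using legendre_oscillatory_integral_bound_general k ℓ hkℓ c hc ξ (by simpa using hξ)
end
end

section
/- Let m ≥ n ≥ 1, let A, E be complex m×n matrices, let b, e ∈ ℂ^m, and let x ∈ ℂ^n satisfy A x = b. Let ε > 0 and suppose ‖E‖₂ < ε/2, where ‖·‖₂ denotes the operator norm induced by the Euclidean norms. Suppose A + E = Σ_{i=1}^{n} σ̂_i u_i v_i*, where u_1,…,u_n ∈ ℂ^m are orthonormal, v_1,…,v_n form an orthonormal basis of ℂ^n, and σ̂_1 ≥ σ̂_2 ≥ … ≥ σ̂_n ≥ 0 (set σ̂_{n+1} = 0). Let 1 ≤ k ≤ n satisfy σ̂_k ≥ ε ≥ σ̂_{k+1}, and define x̂_k = Σ_{i=1}^{k} σ̂_i^{−1} (u_i* (b + e)) v_i. Then ‖x̂_k‖₂ ≤ (1/σ̂_k)(2ε‖x‖₂ + ‖e‖₂) + ‖x‖₂, and ‖A x̂_k − b‖₂ ≤ 5ε‖x‖₂ + (3/2)‖e‖₂. -/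
open scoped InnerProductSpace

noncomputable section

/-!
Put `B = A + E` and `f = e - E x`, so that the perturbed right-hand side is `b + e = B x + f`.
Let `T` be the truncated inverse of `B`, with `x̂ = T (B x + f)`. Both `T B` and `B T` are
orthogonal projections, onto the spans of the retained right and left singular vectors.
Hence `x̂ = T B x + T f` differs from the projection `T B x` by at most `‖f‖ / τ`, where `τ` is the
smallest retained singular value, while `B x̂ - B x = B T f - B (x - T B x)`, whose two terms are
bounded by `‖f‖` and by the largest discarded singular value times `‖x‖`. The residual is then
`A x̂ - b = (B x̂ - B x) + E (x - x̂)`.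
-/

section OrthonormalSums

variable {𝕜 ι H K : Type*} [RCLike 𝕜] [NormedAddCommGroup H] [InnerProductSpace 𝕜 H]
  [NormedAddCommGroup K] [InnerProductSpace 𝕜 K] {u : ι → K} {v : ι → H}

lemma norm_sq_sum_smul_of_orthonormal (hv : Orthonormal 𝕜 v) (a : ι → 𝕜) (s : Finset ι) :
    ‖∑ i ∈ s, a i • v i‖ ^ 2 = ∑ i ∈ s, ‖a i‖ ^ 2 := by
  simpa using hv.orthogonalFamily.norm_sum a s

lemma norm_sum_smul_le_of_norm_le_mul_norm_inner (hu : Orthonormal 𝕜 u) (hv : Orthonormal 𝕜 v)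
    {a : ι → 𝕜} {s : Finset ι} {C : ℝ} {z : H} (hC : 0 ≤ C)
    (ha : ∀ i ∈ s, ‖a i‖ ≤ C * ‖⟪v i, z⟫_𝕜‖) :
    ‖∑ i ∈ s, a i • u i‖ ≤ C * ‖z‖ := by
  refine (sq_le_sq₀ (norm_nonneg _) (by positivity)).1 ?_
  calc ‖∑ i ∈ s, a i • u i‖ ^ 2 = ∑ i ∈ s, ‖a i‖ ^ 2 := norm_sq_sum_smul_of_orthonormal hu a s
    _ ≤ ∑ i ∈ s, (C * ‖⟪v i, z⟫_𝕜‖) ^ 2 := by gcongr with i hi; exact ha i hi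
    _ = C ^ 2 * ∑ i ∈ s, ‖⟪v i, z⟫_𝕜‖ ^ 2 := by simp only [mul_pow, Finset.mul_sum]
    _ ≤ C ^ 2 * ‖z‖ ^ 2 := by gcongr; exact hv.sum_inner_products_le z
    _ = (C * ‖z‖) ^ 2 := (mul_pow _ _ _).symm

lemma norm_sum_inner_smul_le (hv : Orthonormal 𝕜 v) (s : Finset ι) (z : H) :
    ‖∑ i ∈ s, ⟪v i, z⟫_𝕜 • v i‖ ≤ ‖z‖ := by
  simpa using norm_sum_smul_le_of_norm_le_mul_norm_inner hv hv (s := s) zero_le_one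
    fun i _ ↦ (one_mul ‖⟪v i, z⟫_𝕜‖).ge

lemma inner_sub_sum_inner_smul_eq_zero (hv : Orthonormal 𝕜 v) {s : Finset ι} (z : H) {i : ι}
    (hi : i ∈ s) : ⟪v i, z - ∑ j ∈ s, ⟪v j, z⟫_𝕜 • v j⟫_𝕜 = 0 := by
  rw [inner_sub_right, hv.inner_right_sum _ hi, sub_self]

lemma norm_sub_sum_inner_smul_le (hv : Orthonormal 𝕜 v) (s : Finset ι) (z : H) :
    ‖z - ∑ i ∈ s, ⟪v i, z⟫_𝕜 • v i‖ ≤ ‖z‖ := by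
  set p := ∑ i ∈ s, ⟪v i, z⟫_𝕜 • v i with hp
  have horth : ⟪p, z - p⟫_𝕜 = 0 := by
    rw [hp, sum_inner]
    exact Finset.sum_eq_zero fun i hi ↦ by
      rw [inner_smul_left, inner_sub_sum_inner_smul_eq_zero hv z hi, mul_zero]
  have hpyth := norm_add_sq_eq_norm_sq_add_norm_sq_of_inner_eq_zero p (z - p) horth
  rw [add_sub_cancel] at hpyth
  nlinarith [norm_nonneg z, norm_nonneg (z - p), mul_self_nonneg ‖p‖]

end OrthonormalSums

section SingularExpansion

variable {𝕜 ι H K : Type*} [RCLike 𝕜] [NormedAddCommGroup H] [InnerProductSpace 𝕜 H]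
  [NormedAddCommGroup K] [InnerProductSpace 𝕜 K]

/-- The singular value expansion `B = ∑ σᵢ uᵢ vᵢ*`, possibly infinite and converging pointwise.
The `σᵢ` may be arbitrary scalars, the singular values being `‖σᵢ‖`, and the `vᵢ` need not
span. -/
structure IsSingularExpansion (B : H →L[𝕜] K) (σ : ι → 𝕜) (u : ι → K) (v : ι → H) : Prop where
  left_orthonormal : Orthonormal 𝕜 u
  right_orthonormal : Orthonormal 𝕜 v
  hasSum_apply (z : H) : HasSum (fun i ↦ (σ i * ⟪v i, z⟫_𝕜) • u i) (B z)

/-- The truncated pseudoinverse `∑_{i ∈ s} σᵢ⁻¹ vᵢ uᵢ*`, which sends a right-hand side to the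
solution obtained from the truncated singular value decomposition. The usual `k`-truncation takes
for `s` the first `k` indices. -/
def truncatedInverse (σ : ι → 𝕜) (u : ι → K) (v : ι → H) (s : Finset ι) : K →L[𝕜] H :=
  ∑ i ∈ s, (σ i)⁻¹ • InnerProductSpace.rankOne 𝕜 (v i) (u i)

lemma truncatedInverse_apply (σ : ι → 𝕜) (u : ι → K) (v : ι → H) (s : Finset ι) (y : K) :
    truncatedInverse σ u v s y = ∑ i ∈ s, ((σ i)⁻¹ * ⟪u i, y⟫_𝕜) • v i := by
  simp [truncatedInverse, mul_smul]

variable {B : H →L[𝕜] K} {σ : ι → 𝕜} {u : ι → K} {v : ι → H} {s : Finset ι} {τ ε : ℝ}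

lemma norm_truncatedInverse_apply_le (hu : Orthonormal 𝕜 u) (hv : Orthonormal 𝕜 v) (hτ : 0 < τ)
    (hσ : ∀ i ∈ s, τ ≤ ‖σ i‖) (y : K) : ‖truncatedInverse σ u v s y‖ ≤ τ⁻¹ * ‖y‖ := by
  rw [truncatedInverse_apply]
  refine norm_sum_smul_le_of_norm_le_mul_norm_inner hv hu (inv_nonneg.2 hτ.le) fun i hi ↦ ?_
  rw [norm_mul, norm_inv]
  gcongr
  exact hσ i hi

namespace IsSingularExpansion

lemma inner_left_apply (hB : IsSingularExpansion B σ u v) (i : ι) (z : H) :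
    ⟪u i, B z⟫_𝕜 = σ i * ⟪v i, z⟫_𝕜 := by
  have hoff (j : ι) (hj : j ≠ i) : ⟪u i, (σ j * ⟪v j, z⟫_𝕜) • u j⟫_𝕜 = 0 := by
    rw [inner_smul_right, hB.left_orthonormal.inner_eq_zero hj.symm, mul_zero]
  have hsum := ((hB.hasSum_apply z).mapL (innerSL 𝕜 (u i))).unique (hasSum_single i hoff)
  simpa [inner_smul_right, hB.left_orthonormal.norm_eq_one] using hsum

lemma apply_right (hB : IsSingularExpansion B σ u v) (i : ι) : B (v i) = σ i • u i := by
  have hoff (j : ι) (hj : j ≠ i) : (σ j * ⟪v j, v i⟫_𝕜) • u j = 0 := by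
    rw [hB.right_orthonormal.inner_eq_zero hj, mul_zero, zero_smul]
  have hsum := (hB.hasSum_apply (v i)).unique (hasSum_single i hoff)
  simpa [hB.right_orthonormal.norm_eq_one] using hsum

lemma norm_apply_le_of_inner_eq_zero (hB : IsSingularExpansion B σ u v) (hε : 0 ≤ ε)
    (hσ : ∀ i ∉ s, ‖σ i‖ ≤ ε) {z : H} (hz : ∀ i ∈ s, ⟪v i, z⟫_𝕜 = 0) : ‖B z‖ ≤ ε * ‖z‖ := by
  refine le_of_tendsto' (hB.hasSum_apply z).norm fun t ↦ ?_
  refine norm_sum_smul_le_of_norm_le_mul_norm_inner hB.left_orthonormal hB.right_orthonormal hε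
    fun i _ ↦ ?_
  by_cases hi : i ∈ s
  · simp [hz i hi]
  · rw [norm_mul]
    gcongr
    exact hσ i hi

lemma truncatedInverse_apply_apply (hB : IsSingularExpansion B σ u v) (hσ : ∀ i ∈ s, σ i ≠ 0)
    (z : H) : truncatedInverse σ u v s (B z) = ∑ i ∈ s, ⟪v i, z⟫_𝕜 • v i := by
  rw [truncatedInverse_apply]
  refine Finset.sum_congr rfl fun i hi ↦ ?_
  rw [hB.inner_left_apply, inv_mul_cancel_left₀ (hσ i hi)]

lemma apply_truncatedInverse_apply (hB : IsSingularExpansion B σ u v) (hσ : ∀ i ∈ s, σ i ≠ 0)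
    (y : K) : B (truncatedInverse σ u v s y) = ∑ i ∈ s, ⟪u i, y⟫_𝕜 • u i := by
  rw [truncatedInverse_apply, map_sum]
  refine Finset.sum_congr rfl fun i hi ↦ ?_
  rw [map_smul, hB.apply_right, smul_smul, mul_right_comm, inv_mul_cancel₀ (hσ i hi), one_mul]

lemma norm_truncatedInverse_add_le (hB : IsSingularExpansion B σ u v) (hτ : 0 < τ)
    (hσ : ∀ i ∈ s, τ ≤ ‖σ i‖) (x : H) (f : K) :
    ‖truncatedInverse σ u v s (B x + f)‖ ≤ ‖x‖ + τ⁻¹ * ‖f‖ := by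
  have hσ₀ (i) (hi : i ∈ s) : σ i ≠ 0 := norm_pos_iff.1 (hτ.trans_le (hσ i hi))
  rw [map_add, hB.truncatedInverse_apply_apply hσ₀]
  exact norm_add_le_of_le (norm_sum_inner_smul_le hB.right_orthonormal s x)
    (norm_truncatedInverse_apply_le hB.left_orthonormal hB.right_orthonormal hτ hσ f)

lemma norm_sub_truncatedInverse_add_le (hB : IsSingularExpansion B σ u v) (hτ : 0 < τ)
    (hσ : ∀ i ∈ s, τ ≤ ‖σ i‖) (x : H) (f : K) :
    ‖x - truncatedInverse σ u v s (B x + f)‖ ≤ ‖x‖ + τ⁻¹ * ‖f‖ := by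
  have hσ₀ (i) (hi : i ∈ s) : σ i ≠ 0 := norm_pos_iff.1 (hτ.trans_le (hσ i hi))
  rw [map_add, hB.truncatedInverse_apply_apply hσ₀, ← sub_sub]
  exact norm_sub_le_of_le (norm_sub_sum_inner_smul_le hB.right_orthonormal s x)
    (norm_truncatedInverse_apply_le hB.left_orthonormal hB.right_orthonormal hτ hσ f)

lemma norm_apply_truncatedInverse_add_sub_le (hB : IsSingularExpansion B σ u v) (hε : 0 ≤ ε)
    (hσ₀ : ∀ i ∈ s, σ i ≠ 0) (hσε : ∀ i ∉ s, ‖σ i‖ ≤ ε) (x : H) (f : K) :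
    ‖B (truncatedInverse σ u v s (B x + f)) - B x‖ ≤ ‖f‖ + ε * ‖x‖ := by
  set p := ∑ i ∈ s, ⟪v i, x⟫_𝕜 • v i
  have hsplit : B (truncatedInverse σ u v s (B x + f)) - B x
      = ∑ i ∈ s, ⟪u i, f⟫_𝕜 • u i - B (x - p) := by
    rw [map_add, map_add, hB.truncatedInverse_apply_apply hσ₀,
      hB.apply_truncatedInverse_apply hσ₀, map_sub]
    abel
  have hdiscarded : ‖B (x - p)‖ ≤ ε * ‖x‖ :=
    calc ‖B (x - p)‖ ≤ ε * ‖x - p‖ := hB.norm_apply_le_of_inner_eq_zero hε hσε fun i hi ↦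
          inner_sub_sum_inner_smul_eq_zero hB.right_orthonormal x hi
      _ ≤ ε * ‖x‖ := by gcongr; exact norm_sub_sum_inner_smul_le hB.right_orthonormal s x
  rw [hsplit]
  exact norm_sub_le_of_le (norm_sum_inner_smul_le hB.left_orthonormal s f) hdiscarded

end IsSingularExpansion

theorem truncated_svd_bounds_general {A E : H →L[𝕜] K}
    (hAE : IsSingularExpansion (A + E) σ u v) (hE : ‖E‖ ≤ ε / 2) (hτ : 0 < τ) (hετ : ε ≤ τ)
    (hσ : ∀ i ∈ s, τ ≤ ‖σ i‖) (hσε : ∀ i ∉ s, ‖σ i‖ ≤ ε) (x : H) (e : K) :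
    ‖truncatedInverse σ u v s (A x + e)‖ ≤ τ⁻¹ * (ε / 2 * ‖x‖ + ‖e‖) + ‖x‖ ∧
    ‖A (truncatedInverse σ u v s (A x + e)) - A x‖ ≤ 9 / 4 * ε * ‖x‖ + 3 / 2 * ‖e‖ := by
  obtain ⟨f, hf⟩ : ∃ f, f = e - E x := ⟨_, rfl⟩
  have hrhs : A x + e = (A + E) x + f := by rw [hf, add_apply]; abel
  have hε : 0 ≤ ε := by linarith [norm_nonneg E]
  have hf_le : ‖f‖ ≤ ε / 2 * ‖x‖ + ‖e‖ := by
    rw [hf, add_comm]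
    exact norm_sub_le_of_le le_rfl (E.le_of_opNorm_le hE x)
  rw [hrhs]
  set y := truncatedInverse σ u v s ((A + E) x + f)
  refine ⟨?_, ?_⟩
  · calc ‖y‖ ≤ ‖x‖ + τ⁻¹ * ‖f‖ := hAE.norm_truncatedInverse_add_le hτ hσ x f
      _ ≤ τ⁻¹ * (ε / 2 * ‖x‖ + ‖e‖) + ‖x‖ := by rw [add_comm]; gcongr
  · have hresidual : A y - A x = ((A + E) y - (A + E) x) + E (x - y) := by
      simp only [add_apply, map_sub]
      abel
    have hσ₀ (i) (hi : i ∈ s) : σ i ≠ 0 := norm_pos_iff.1 (hτ.trans_le (hσ i hi))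
    have hετ_inv : ε * τ⁻¹ ≤ 1 := mul_inv_le_one_of_le₀ hετ hτ.le
    calc ‖A y - A x‖ ≤ (‖f‖ + ε * ‖x‖) + ε / 2 * ‖x - y‖ := by
          rw [hresidual]
          exact norm_add_le_of_le (hAE.norm_apply_truncatedInverse_add_sub_le hε hσ₀ hσε x f)
            (E.le_of_opNorm_le hE _)
      _ ≤ (‖f‖ + ε * ‖x‖) + ε / 2 * (‖x‖ + τ⁻¹ * ‖f‖) := by
          gcongr
          exact hAE.norm_sub_truncatedInverse_add_le hτ hσ x f
      _ = 3 / 2 * ε * ‖x‖ + (1 + ε * τ⁻¹ / 2) * ‖f‖ := by ring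
      _ ≤ 3 / 2 * ε * ‖x‖ + (1 + 1 / 2) * (ε / 2 * ‖x‖ + ‖e‖) := by gcongr
      _ = 9 / 4 * ε * ‖x‖ + 3 / 2 * ‖e‖ := by ring

end SingularExpansion

/-- Error bounds for solutions of linear systems computed via a
truncated singular value decomposition. The matrices `A`, `E` are encoded as linear maps
`ℂⁿ → ℂᵐ` (with the Euclidean norms), and `A + E = ∑ σ̂ᵢ uᵢ vᵢ*` is an SVD of `A + E`
with descending singular values; `σ̂_k ≥ ε ≥ σ̂_{k+1}` is encoded (0-indexed, using the
monotonicity) as `ε ≤ σ̂ᵢ` for `i < k` and `σ̂ᵢ ≤ ε` for `k ≤ i`. -/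
theorem truncated_svd_bounds (m n : ℕ) (hn : 1 ≤ n) (hmn : n ≤ m)
    (A E : EuclideanSpace ℂ (Fin n) →L[ℂ] EuclideanSpace ℂ (Fin m))
    (b e : EuclideanSpace ℂ (Fin m)) (x : EuclideanSpace ℂ (Fin n))
    (hAx : A x = b) (ε : ℝ) (hε : 0 < ε) (hE : ‖E‖ < ε / 2)
    (u : Fin n → EuclideanSpace ℂ (Fin m)) (hu : Orthonormal ℂ u)
    (v : Fin n → EuclideanSpace ℂ (Fin n)) (hv : Orthonormal ℂ v)
    (σ : Fin n → ℝ) (hσ0 : ∀ i, 0 ≤ σ i)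
    (hσmono : ∀ i j : Fin n, i ≤ j → σ j ≤ σ i)
    (hSVD : ∀ z : EuclideanSpace ℂ (Fin n),
      (A + E) z = ∑ i : Fin n, (((σ i : ℂ)) * ⟪v i, z⟫_ℂ) • u i)
    (k : ℕ) (hk1 : 1 ≤ k) (hkn : k ≤ n)
    (hgeq : ∀ i : Fin n, (i : ℕ) < k → ε ≤ σ i)
    (hleq : ∀ i : Fin n, k ≤ (i : ℕ) → σ i ≤ ε) :
    ‖∑ i ∈ Finset.univ.filter (fun i : Fin n => (i : ℕ) < k),
        (((σ i : ℂ))⁻¹ * ⟪u i, b + e⟫_ℂ) • v i‖ ≤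
      (σ ⟨k - 1, by omega⟩)⁻¹ * (2 * ε * ‖x‖ + ‖e‖) + ‖x‖ ∧
    ‖A (∑ i ∈ Finset.univ.filter (fun i : Fin n => (i : ℕ) < k),
        (((σ i : ℂ))⁻¹ * ⟪u i, b + e⟫_ℂ) • v i) - b‖ ≤
      5 * ε * ‖x‖ + (3 / 2) * ‖e‖ := by
  have hnorm (i : Fin n) : ‖(σ i : ℂ)‖ = σ i := Complex.norm_of_nonneg (hσ0 i)
  have hτ : ε ≤ σ ⟨k - 1, by omega⟩ := hgeq _ (Nat.sub_one_lt_of_lt hk1)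
  obtain ⟨hsolution, hresidual⟩ := truncated_svd_bounds_general (σ := fun i ↦ (σ i : ℂ))
    (s := Finset.univ.filter fun i : Fin n ↦ (i : ℕ) < k)
    ⟨hu, hv, fun z ↦ hSVD z ▸ hasSum_fintype _⟩ hE.le (hε.trans_le hτ) hτ
    (fun i hi ↦ (hσmono _ _ (Nat.le_sub_one_of_lt (Finset.mem_filter.1 hi).2)).trans (hnorm i).ge)
    (fun i hi ↦ (hnorm i).le.trans (hleq i (by simpa using hi))) x e
  rw [hAx, truncatedInverse_apply] at hsolution hresidual
  have hτ₀ := hε.trans_le hτ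
  exact ⟨hsolution.trans (by gcongr; linarith), hresidual.trans (by gcongr; norm_num)⟩
end
end

section
/- Suppose f : [−1,1]² → ℂ and g : [−1,1]² → ℝ admit infinitely differentiable extensions to an open neighborhood of [−1,1]², and that G₁ := max_{[−1,1]²} |∂g/∂x| < 1/2, with ∂g/∂x not identically zero. Let 0 < ε < 1 and set n = ⌊log(ε)/log(2G₁)⌋. Then there exists a smooth function p_b : ℝ² → ℂ of at most polynomial growth (defining a tempered distribution) such that: (1) the Fourier transform of p_b is a tempered distribution of order at most 1 supported in [−c_f(ε) − n·c_{g_x}(ε), c_f(ε) + n·c_{g_x}(ε)]²; (2) |∂p_b/∂x(x,y) + i (∂g/∂x)(x,y) p_b(x,y) − f(x,y)| ≤ 3ε (1 + G₁/(1−2G₁)) sup_{[−1,1]²} |f| for all (x,y) ∈ [−1,1]²; (3) sup_{[−1,1]²} |p_b| ≤ (2/(1−2G₁)) sup_{[−1,1]²} |f|; and (4) sup_{[−1,1]²} |∂p_b/∂x| ≤ 4 (1 + G₁/(1−2G₁)) sup_{[−1,1]²} |f|. -/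
open MeasureTheory Real

noncomputable section

/-- The partial derivative `∂/∂x` of a complex-valued function on `ℝ²`. -/
def pd1 (f : ℝ × ℝ → ℂ) : ℝ × ℝ → ℂ := fun z => fderiv ℝ f z (1, 0)

/-- The partial derivative `∂/∂y` of a complex-valued function on `ℝ²`. -/
def pd2 (f : ℝ × ℝ → ℂ) : ℝ × ℝ → ℂ := fun z => fderiv ℝ f z (0, 1)

/-- The multi-index partial derivative `D^α = ∂_x^{α₁} ∂_y^{α₂}` on `ℝ²`. -/
def mderiv2 (α : ℕ × ℕ) (f : ℝ × ℝ → ℂ) : ℝ × ℝ → ℂ := pd1^[α.1] (pd2^[α.2] f)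

/-- The Fourier transform on `ℝ²` with the paper's normalization:
`f̂(ξ) = (1/(4π²)) ∫∫ f(x) e^{-i ξ·x} dx`. -/
def paperFT (f : ℝ × ℝ → ℂ) (ξ : ℝ × ℝ) : ℂ :=
  (1 / (4 * (π : ℂ) ^ 2)) *
    ∫ x : ℝ × ℝ, f x * Complex.exp (-Complex.I * ((ξ.1 * x.1 + ξ.2 * x.2 : ℝ) : ℂ))

/-- The sup of `‖f‖` over a subset `S` of `ℝ²`. -/
def supOn (f : ℝ × ℝ → ℂ) (S : Set (ℝ × ℝ)) : ℝ := ⨆ z : S, ‖f (z : ℝ × ℝ)‖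

/-- The square `[-c,c]²` in `ℝ²`. -/
def sqIcc (c : ℝ) : Set (ℝ × ℝ) := Set.Icc ((-c, -c) : ℝ × ℝ) ((c, c) : ℝ × ℝ)

/-- `fb` is an `ε`-bandlimited approximation of `f` (defined on `Ω`) with bandlimit `c`. -/
def IsBandlimitedApprox (Ω : Set (ℝ × ℝ)) (f : ℝ × ℝ → ℂ) (ε c : ℝ)
    (fb : SchwartzMap (ℝ × ℝ) ℂ) : Prop :=
  (∀ ξ : ℝ × ℝ, ξ ∉ sqIcc c → paperFT (⇑fb) ξ = 0) ∧
  (∀ z ∈ Ω, ‖fb z - f z‖ ≤ ε * supOn f Ω) ∧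
  (∀ z : ℝ × ℝ, ‖fb z‖ ≤ 3 * supOn f Ω) ∧
  (∀ α : ℕ × ℕ, α.1 + α.2 ≤ 2 → ∀ ξ : ℝ × ℝ,
    ‖mderiv2 α (paperFT ⇑fb) ξ‖ ≤ 10 * supOn f Ω)

/-- `c_f(ε)`: the infimum of the bandlimits of `ε`-bandlimited approximations of `f`. -/
def bandlimitConst (Ω : Set (ℝ × ℝ)) (f : ℝ × ℝ → ℂ) (ε : ℝ) : ℝ :=
  sInf {c : ℝ | 0 < c ∧ ∃ fb : SchwartzMap (ℝ × ℝ) ℂ, IsBandlimitedApprox Ω f ε c fb}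

/-- `p` has at most polynomial growth. -/
def PolyGrowth (p : ℝ × ℝ → ℂ) : Prop :=
  ∃ (C : ℝ) (k : ℕ), ∀ z : ℝ × ℝ, ‖p z‖ ≤ C * (1 + ‖z‖) ^ k

/-- The Fourier transform of (the tempered distribution induced by) a function `p` of
polynomial growth, as a functional on Schwartz space: `⟨p̂, ψ⟩ = ⟨p, ψ̂⟩`. -/
def ftFunctional (p : ℝ × ℝ → ℂ) : SchwartzMap (ℝ × ℝ) ℂ → ℂ :=
  fun ψ => ∫ x : ℝ × ℝ, p x * paperFT (⇑ψ) x

/-- The support of a functional on Schwartz space (e.g. a tempered distribution). -/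
def funcSupport (F : SchwartzMap (ℝ × ℝ) ℂ → ℂ) : Set (ℝ × ℝ) :=
  (⋃₀ {U : Set (ℝ × ℝ) |
    IsOpen U ∧ ∀ ψ : SchwartzMap (ℝ × ℝ) ℂ, tsupport ⇑ψ ⊆ U → F ψ = 0})ᶜ

/-- A functional on Schwartz space has order at most `m` if for every compact `K` there
is a constant `M` so that `‖F ψ‖ ≤ M · sup_{|α| ≤ m} sup_{x ∈ K} ‖D^α ψ(x)‖` for every
Schwartz `ψ` supported in `K` (phrased via arbitrary upper bounds `B` for that sup). -/
def funcOrderAtMost (F : SchwartzMap (ℝ × ℝ) ℂ → ℂ) (m : ℕ) : Prop :=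
  ∀ K : Set (ℝ × ℝ), IsCompact K → ∃ M : ℝ,
    ∀ ψ : SchwartzMap (ℝ × ℝ) ℂ, tsupport ⇑ψ ⊆ K →
      ∀ B : ℝ, 0 ≤ B →
        (∀ α : ℕ × ℕ, α.1 + α.2 ≤ m → ∀ x ∈ K, ‖mderiv2 α (⇑ψ) x‖ ≤ B) →
        ‖F ψ‖ ≤ M * B

/-- The unit square `[-1,1]²`. -/
def unitSq : Set (ℝ × ℝ) := Set.Icc ((-1, -1) : ℝ × ℝ) ((1, 1) : ℝ × ℝ)

/-!
Writing `p(x, y) = ∫₀ˣ u(t, y) dt` turns the Levin equation `∂p/∂x + i V p = F` into the fixed point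
equation `u = F - i V ∫₀ˣ u`, which contracts on `[-1,1]²` as soon as `|V| < 1` there. Here `F` and
`V` are bandlimited replacements of `f` and `∂g/∂x` with `|V| ≤ 2 G₁`, and `u` is the `n`-th partial
sum of the Neumann series. Multiplying an `x`-primitive by `V` enlarges the band only by that of
`V`: on the frequency side it convolves with a divided difference of the spectral density of `V`,
bounded because that density is Lipschitz. The same divided difference, applied to test functions,
gives order and support of the Fourier transform of `p`. Lipschitz densities with the optimal
bandlimits `c_f(ε)` and `c_{g_x}(ε)` come from the bounds on `D^α ĥ_b` via Arzelà–Ascoli.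
-/

open Filter Set
open scoped ContDiff FourierTransform NNReal SchwartzMap Topology

/-- The plane wave `x ↦ e^{i ξ·x}` of frequency `ξ`. -/
def planeWave (ξ x : ℝ × ℝ) : ℂ := Complex.exp (Complex.I * ((ξ.1 * x.1 + ξ.2 * x.2 : ℝ) : ℂ))

/-- The superposition `x ↦ ∫ φ(ξ) e^{i ξ·x} dξ` of plane waves with frequency density `φ`; in the
normalization of `paperFT` this is the inverse Fourier transform of `φ`. -/
def synth (φ : ℝ × ℝ → ℂ) (x : ℝ × ℝ) : ℂ := ∫ ξ, φ ξ * planeWave ξ x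

lemma norm_planeWave (ξ x : ℝ × ℝ) : ‖planeWave ξ x‖ = 1 := by
  rw [planeWave, mul_comm, Complex.norm_exp_ofReal_mul_I]

lemma planeWave_comm (ξ x : ℝ × ℝ) : planeWave ξ x = planeWave x ξ := by
  simp only [planeWave, mul_comm]

lemma planeWave_add (ξ η x : ℝ × ℝ) : planeWave (ξ + η) x = planeWave ξ x * planeWave η x := by
  rw [planeWave, planeWave, planeWave, ← Complex.exp_add]
  congr 1
  push_cast [Prod.fst_add, Prod.snd_add]
  ring

@[fun_prop]
lemma continuous_planeWave : Continuous fun z : (ℝ × ℝ) × (ℝ × ℝ) => planeWave z.1 z.2 := by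
  unfold planeWave
  fun_prop

lemma integrable_mul_planeWave {φ : ℝ × ℝ → ℂ} (hφ : Integrable φ) (x : ℝ × ℝ) :
    Integrable fun ξ => φ ξ * planeWave ξ x :=
  hφ.mul_bdd (by fun_prop) (.of_forall fun ξ => (norm_planeWave ξ x).le)

lemma norm_synth_le (φ : ℝ × ℝ → ℂ) (x : ℝ × ℝ) : ‖synth φ x‖ ≤ ∫ ξ, ‖φ ξ‖ :=
  (norm_integral_le_integral_norm _).trans_eq <| by simp only [norm_mul, norm_planeWave, mul_one]

lemma synth_const_mul (c : ℂ) (φ : ℝ × ℝ → ℂ) :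
    synth (fun ξ => c * φ ξ) = fun x => c * synth φ x := by
  ext x
  simp only [synth, mul_assoc, integral_const_mul]

lemma synth_mul_planeWave (γ : ℝ × ℝ → ℂ) (ξ x : ℝ × ℝ) :
    synth γ x * planeWave ξ x = synth (fun ζ => γ (ζ - ξ)) x := by
  rw [synth, synth, ← integral_mul_const, ← integral_sub_right_eq_self _ ξ]
  congr 1 with ζ
  rw [mul_assoc, ← planeWave_add, sub_add_cancel]

lemma paperFT_eq_synth_neg (f : ℝ × ℝ → ℂ) (ξ : ℝ × ℝ) :
    paperFT f ξ = 1 / (4 * (π : ℂ) ^ 2) * synth f (-ξ) := by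
  simp only [paperFT, synth, planeWave]
  congr! 5
  push_cast [Prod.fst_neg, Prod.snd_neg]
  ring

/-- The pairing `-ξ·x / 2π`, which turns `synth` into a `VectorFourier.fourierIntegral`. -/
def synthPairing : (ℝ × ℝ) →L[ℝ] (ℝ × ℝ) →L[ℝ] ℝ :=
  (-(2 * π)⁻¹) •
    ((ContinuousLinearMap.mul ℝ ℝ).bilinearComp (.fst ℝ ℝ ℝ) (.fst ℝ ℝ ℝ) +
      (ContinuousLinearMap.mul ℝ ℝ).bilinearComp (.snd ℝ ℝ ℝ) (.snd ℝ ℝ ℝ))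

lemma synthPairing_apply (ξ x : ℝ × ℝ) :
    synthPairing ξ x = -(2 * π)⁻¹ * (ξ.1 * x.1 + ξ.2 * x.2) := rfl

lemma synth_eq_fourierIntegral (φ : ℝ × ℝ → ℂ) :
    synth φ = VectorFourier.fourierIntegral 𝐞 volume synthPairing.toLinearMap₁₂ φ := by
  ext x
  simp only [synth, VectorFourier.fourierIntegral]
  congr 1 with ξ
  rw [Circle.smul_def, Real.fourierChar_apply, smul_eq_mul, mul_comm, planeWave]
  congr 2
  have hpair : synthPairing.toLinearMap₁₂ ξ x = -(2 * π)⁻¹ * (ξ.1 * x.1 + ξ.2 * x.2) :=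
    synthPairing_apply ξ x
  rw [hpair]
  push_cast
  field_simp

lemma contDiff_synth {φ : ℝ × ℝ → ℂ} (hφ : ∀ n : ℕ, Integrable fun ξ => ‖ξ‖ ^ n * ‖φ ξ‖) :
    ContDiff ℝ ∞ (synth φ) := by
  rw [synth_eq_fourierIntegral]
  exact VectorFourier.contDiff_fourierIntegral _ fun n _ => hφ n

lemma fderiv_synth_apply {φ : ℝ × ℝ → ℂ} (hφ : Integrable φ)
    (hφ' : Integrable fun ξ => ‖ξ‖ * ‖φ ξ‖) (x v : ℝ × ℝ) :
    fderiv ℝ (synth φ) x v =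
      synth (fun ξ => Complex.I * ((ξ.1 * v.1 + ξ.2 * v.2 : ℝ) : ℂ) * φ ξ) x := by
  have hd := VectorFourier.hasFDerivAt_fourierIntegral synthPairing hφ hφ' x
  rw [← synth_eq_fourierIntegral] at hd
  have hint : Integrable (VectorFourier.fourierSMulRight synthPairing φ) :=
    (hφ'.const_mul (2 * π * ‖synthPairing‖)).mono' hφ.1.fourierSMulRight
      (.of_forall fun ξ => by
        simpa only [mul_assoc] using VectorFourier.norm_fourierSMulRight_le synthPairing φ ξ)
  rw [hd.fderiv, synth_eq_fourierIntegral,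
    Real.fourierIntegral_continuousLinearMap_apply' hint]
  congr 1 with ξ
  rw [VectorFourier.fourierSMulRight_apply, synthPairing_apply, Complex.real_smul, smul_eq_mul]
  push_cast
  field_simp

/-- The scaling `x ↦ x / √(2π)` onto the Euclidean plane. It puts the same factor `2π` in front of
Mathlib's Fourier transform and of its inverse when these are written as integrals over `ℝ × ℝ`
against `planeWave`. -/
def toEuclideanScaled : (ℝ × ℝ) ≃L[ℝ] WithLp 2 (ℝ × ℝ) :=
  (WithLp.prodContinuousLinearEquiv 2 ℝ ℝ ℝ).symm.trans
    (ContinuousLinearEquiv.smulLeft (Units.mk0 (√(2 * π))⁻¹ (by positivity)))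

lemma toEuclideanScaled_apply (x : ℝ × ℝ) :
    toEuclideanScaled x = (√(2 * π))⁻¹ • WithLp.toLp 2 x := rfl

lemma inner_toEuclideanScaled (ξ x : ℝ × ℝ) :
    2 * π * inner ℝ (toEuclideanScaled ξ) (toEuclideanScaled x) = ξ.1 * x.1 + ξ.2 * x.2 := by
  rw [toEuclideanScaled_apply, toEuclideanScaled_apply, real_inner_smul_left,
    real_inner_smul_right, ← mul_assoc (√(2 * π))⁻¹, ← mul_inv,
    Real.mul_self_sqrt (by positivity), mul_inv_cancel_left₀ (by positivity),
    WithLp.prod_inner_apply]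
  simp [mul_comm]

lemma integral_comp_toEuclideanScaled (F : WithLp 2 (ℝ × ℝ) → ℂ) :
    2 * (π : ℂ) * ∫ v, F v = ∫ x, F (toEuclideanScaled x) := by
  have hvol : ∫ x, F (toEuclideanScaled x) = ∫ v, F ((√(2 * π))⁻¹ • v) :=
    ((WithLp.volume_preserving_toLp ℝ ℝ).integral_comp
      (WithLp.homeomorphProd 2 ℝ ℝ).symm.measurableEmbedding fun v => F ((√(2 * π))⁻¹ • v))
  have hdim : Module.finrank ℝ (WithLp 2 (ℝ × ℝ)) = 2 := by
    rw [(WithLp.linearEquiv 2 ℝ (ℝ × ℝ)).finrank_eq, Module.finrank_prod, Module.finrank_self]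
  rw [hvol, Measure.integral_comp_smul, hdim, inv_pow, inv_inv, Real.sq_sqrt (by positivity),
    abs_of_pos (by positivity), Complex.real_smul]
  push_cast
  rfl

lemma fourierInv_toEuclideanScaled (F : WithLp 2 (ℝ × ℝ) → ℂ) (x : ℝ × ℝ) :
    2 * (π : ℂ) * 𝓕⁻ F (toEuclideanScaled x) = synth (F ∘ toEuclideanScaled) x := by
  rw [Real.fourierInv_eq', integral_comp_toEuclideanScaled, synth]
  congr 1 with ξ
  rw [inner_toEuclideanScaled, smul_eq_mul, mul_comm, planeWave, mul_comm Complex.I,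
    Function.comp_apply]

lemma fourier_toEuclideanScaled (F : WithLp 2 (ℝ × ℝ) → ℂ) (ξ : ℝ × ℝ) :
    𝓕 F (toEuclideanScaled ξ) = 2 * (π : ℂ) * paperFT (F ∘ toEuclideanScaled) ξ := by
  rw [paperFT_eq_synth_neg, ← fourierInv_toEuclideanScaled, map_neg, Real.fourierInv_eq_fourier_neg,
    neg_neg]
  field_simp
  norm_num

/-- The Schwartz functions on the Euclidean plane, identified with those on `ℝ × ℝ` by pulling back
along `toEuclideanScaled`. -/
def schwartzPullback : 𝓢(WithLp 2 (ℝ × ℝ), ℂ) ≃L[ℂ] 𝓢(ℝ × ℝ, ℂ) :=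
  .equivOfInverse (SchwartzMap.compCLMOfContinuousLinearEquiv ℂ toEuclideanScaled)
    (SchwartzMap.compCLMOfContinuousLinearEquiv ℂ toEuclideanScaled.symm)
    (fun F => by ext; simp) (fun ψ => by ext; simp)

/-- The Fourier transform `paperFT` as an automorphism of Schwartz space, with inverse `synth`. -/
def paperFTEquiv : 𝓢(ℝ × ℝ, ℂ) ≃L[ℂ] 𝓢(ℝ × ℝ, ℂ) :=
  (schwartzPullback.symm.trans (FourierTransform.fourierCLE ℂ 𝓢(WithLp 2 (ℝ × ℝ), ℂ))).trans
    (schwartzPullback.trans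
      (ContinuousLinearEquiv.smulLeft (Units.mk0 (2 * (π : ℂ))⁻¹ (by simp [Real.pi_ne_zero]))))

lemma paperFTEquiv_schwartzPullback (F : 𝓢(WithLp 2 (ℝ × ℝ), ℂ)) :
    paperFTEquiv (schwartzPullback F) = (2 * (π : ℂ))⁻¹ • schwartzPullback (𝓕 F) := by
  simp only [paperFTEquiv, ContinuousLinearEquiv.trans_apply,
    ContinuousLinearEquiv.symm_apply_apply]
  rfl

lemma coe_paperFTEquiv (ψ : 𝓢(ℝ × ℝ, ℂ)) : ⇑(paperFTEquiv ψ) = paperFT ψ := by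
  obtain ⟨F, rfl⟩ := schwartzPullback.surjective ψ
  have hπ : 2 * (π : ℂ) ≠ 0 := by simp [Real.pi_ne_zero]
  have hF (ξ : ℝ × ℝ) : schwartzPullback (𝓕 F) ξ = 2 * π * paperFT (schwartzPullback F) ξ :=
    fourier_toEuclideanScaled F ξ
  ext ξ
  rw [paperFTEquiv_schwartzPullback, smul_apply, hF, smul_eq_mul,
    inv_mul_cancel_left₀ hπ]

lemma coe_paperFTEquiv_symm (φ : 𝓢(ℝ × ℝ, ℂ)) : ⇑(paperFTEquiv.symm φ) = synth φ := by
  obtain ⟨F, rfl⟩ := schwartzPullback.surjective φ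
  have hπ : 2 * (π : ℂ) ≠ 0 := by simp [Real.pi_ne_zero]
  have hF : paperFTEquiv.symm (schwartzPullback F) = (2 * (π : ℂ)) • schwartzPullback (𝓕⁻ F) := by
    rw [ContinuousLinearEquiv.symm_apply_eq, map_smul, paperFTEquiv_schwartzPullback,
      FourierTransform.fourier_fourierInv_eq, smul_inv_smul₀ hπ]
  ext x
  have hx := fourierInv_toEuclideanScaled F x
  rw [← SchwartzMap.fourierInv_coe] at hx
  rw [hF]
  exact hx

lemma synth_paperFT (ψ : 𝓢(ℝ × ℝ, ℂ)) : synth (paperFT ψ) = ψ := by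
  rw [← coe_paperFTEquiv, ← coe_paperFTEquiv_symm, ContinuousLinearEquiv.symm_apply_apply]

/-- The primitive of `W` in the first variable that vanishes on the line `x = 0`. -/
def xPrimitive (W : ℝ × ℝ → ℂ) (z : ℝ × ℝ) : ℂ := ∫ t in 0..z.1, W (t, z.2)

section xPrimitive

variable {W : ℝ × ℝ → ℂ} {z : ℝ × ℝ}

lemma intervalIntegrable_slice (hW : Continuous W) (y a b : ℝ) :
    IntervalIntegrable (fun t => W (t, y)) volume a b :=
  Continuous.intervalIntegrable (by fun_prop) a b

lemma norm_xPrimitive_le {B : ℝ} (hB : ∀ t ∈ uIcc 0 z.1, ‖W (t, z.2)‖ ≤ B) :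
    ‖xPrimitive W z‖ ≤ B * |z.1| := by
  simpa only [xPrimitive, sub_zero] using
    intervalIntegral.norm_integral_le_of_norm_le_const fun t ht => hB t (uIoc_subset_uIcc ht)

lemma continuous_xPrimitive (hW : Continuous W) : Continuous (xPrimitive W) :=
  intervalIntegral.continuous_parametric_intervalIntegral_of_continuous
    (f := fun (z : ℝ × ℝ) t => W (t, z.2)) (by fun_prop) continuous_fst

lemma continuous_pd2 (hW : ContDiff ℝ 1 W) : Continuous (pd2 W) :=
  (hW.continuous_fderiv one_ne_zero).clm_apply continuous_const

lemma hasDerivAt_pd1 (hW : DifferentiableAt ℝ W z) :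
    HasDerivAt (fun x => W (x, z.2)) (pd1 W z) z.1 :=
  hW.hasFDerivAt.comp_hasDerivAt z.1 ((hasDerivAt_id _).prodMk (hasDerivAt_const _ _))

lemma hasDerivAt_pd2 (hW : DifferentiableAt ℝ W z) :
    HasDerivAt (fun y => W (z.1, y)) (pd2 W z) z.2 :=
  hW.hasFDerivAt.comp_hasDerivAt z.2 ((hasDerivAt_const _ _).prodMk (hasDerivAt_id _))

lemma hasDerivAt_xPrimitive_fst (hW : Continuous W) (z : ℝ × ℝ) :
    HasDerivAt (fun x => xPrimitive W (x, z.2)) (W z) z.1 :=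
  (Continuous.integral_hasStrictDerivAt (f := fun t => W (t, z.2)) (by fun_prop) 0 z.1).hasDerivAt

lemma hasDerivAt_xPrimitive_snd (hW : ContDiff ℝ 1 W) (z : ℝ × ℝ) :
    HasDerivAt (fun y => xPrimitive W (z.1, y)) (xPrimitive (pd2 W) z) z.2 := by
  obtain ⟨B, hB⟩ := (isCompact_uIcc.prod (isCompact_closedBall z.2 1)).exists_bound_of_continuousOn
    (continuous_pd2 hW).continuousOn (s := uIcc 0 z.1 ×ˢ Metric.closedBall z.2 1)
  refine (intervalIntegral.hasDerivAt_integral_of_dominated_loc_of_deriv_le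
    (F := fun y t => W (t, y)) (F' := fun y t => pd2 W (t, y)) (bound := fun _ => B)
    (Metric.closedBall_mem_nhds z.2 one_pos) ?_ (intervalIntegrable_slice hW.continuous _ _ _) ?_
    ?_ intervalIntegrable_const ?_).2
  · exact .of_forall fun y => (hW.continuous.comp (.prodMk_left y)).aestronglyMeasurable
  · exact ((continuous_pd2 hW).comp (.prodMk_left z.2)).aestronglyMeasurable
  · exact .of_forall fun t ht y hy => hB (t, y) ⟨uIoc_subset_uIcc ht, hy⟩
  · exact .of_forall fun t _ y _ => hasDerivAt_pd2 (z := (t, y)) (hW.differentiable one_ne_zero _)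

lemma hasFDerivAt_xPrimitive (hW : ContDiff ℝ 1 W) (z : ℝ × ℝ) :
    HasFDerivAt (xPrimitive W)
      ((ContinuousLinearMap.fst ℝ ℝ ℝ).smulRight (W z) +
        (ContinuousLinearMap.snd ℝ ℝ ℝ).smulRight (xPrimitive (pd2 W) z)) z := by
  have hspan : Continuous (ContinuousLinearMap.toSpanSingletonCLE (𝕜 := ℝ) (E := ℂ)) :=
    ContinuousLinearEquiv.continuous _
  have hfderiv := hasStrictFDerivAt_uncurry_coprod (𝕜 := ℝ) (u := z)
    (f := fun x y => xPrimitive W (x, y))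
    (f₁ := fun x y => .toSpanSingleton ℝ (W (x, y)))
    (f₂ := fun x y => .toSpanSingleton ℝ (xPrimitive (pd2 W) (x, y)))
    (.of_forall fun v => (hasDerivAt_xPrimitive_fst hW.continuous v).hasFDerivAt)
    (.of_forall fun v => (hasDerivAt_xPrimitive_snd hW v).hasFDerivAt)
    (hspan.comp hW.continuous).continuousAt
    (hspan.comp (continuous_xPrimitive (continuous_pd2 hW))).continuousAt
  refine hfderiv.hasFDerivAt.congr_fderiv ?_
  ext <;> simp [Function.HasUncurry.uncurry]

lemma pd1_xPrimitive (hW : ContDiff ℝ 1 W) : pd1 (xPrimitive W) = W := by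
  ext z
  simp [pd1, (hasFDerivAt_xPrimitive hW z).fderiv]

lemma contDiff_pd2 (hW : ContDiff ℝ ∞ W) : ContDiff ℝ ∞ (pd2 W) :=
  (hW.fderiv_right le_rfl).clm_apply contDiff_const

lemma contDiff_xPrimitive (hW : ContDiff ℝ ∞ W) : ContDiff ℝ ∞ (xPrimitive W) := by
  refine contDiff_infty.2 fun n => ?_
  induction n generalizing W with
  | zero => exact contDiff_zero.2 (continuous_xPrimitive hW.continuous)
  | succ n ih =>
    have hW1 : ContDiff ℝ 1 W := hW.of_le (by simp)
    refine contDiff_succ_iff_hasFDerivAt.2 ⟨_, ?_, hasFDerivAt_xPrimitive hW1⟩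
    exact (contDiff_const.smulRight (hW.of_le (by exact_mod_cast le_top))).add
      (contDiff_const.smulRight (ih (contDiff_pd2 hW)))

lemma xPrimitive_sum {ι : Type*} (s : Finset ι) {W : ι → ℝ × ℝ → ℂ}
    (hW : ∀ i ∈ s, Continuous (W i)) :
    xPrimitive (fun z => ∑ i ∈ s, W i z) = fun z => ∑ i ∈ s, xPrimitive (W i) z := by
  ext z
  exact intervalIntegral.integral_finsetSum fun i hi => intervalIntegrable_slice (hW i hi) _ _ _

end xPrimitive

lemma mem_sqIcc {c : ℝ} {ξ : ℝ × ℝ} : ξ ∈ sqIcc c ↔ ‖ξ‖ ≤ c := by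
  simp only [sqIcc, mem_Icc, Prod.le_def, Prod.norm_def, Real.norm_eq_abs,
    max_le_iff, abs_le]
  tauto

lemma isCompact_sqIcc (c : ℝ) : IsCompact (sqIcc c) := isCompact_Icc

lemma norm_zero_snd_le (ξ : ℝ × ℝ) : ‖((0 : ℝ), ξ.2)‖ ≤ ‖ξ‖ := by
  simpa using norm_snd_le ξ

/-- The divided difference `(F(ξ₁, ξ₂) - F(0, ξ₂)) / (i ξ₁)`. On the frequency side it is the
counterpart of `xPrimitive`. On the null line `ξ₁ = 0` it takes the junk value `0`. -/
def divDiff (F : ℝ × ℝ → ℂ) (ξ : ℝ × ℝ) : ℂ := (F ξ - F (0, ξ.2)) / (Complex.I * ξ.1)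

lemma ae_fst_ne_zero : ∀ᵐ ξ : ℝ × ℝ, ξ.1 ≠ 0 :=
  Measure.quasiMeasurePreserving_fst.ae (Measure.ae_ne volume (0 : ℝ))

lemma norm_divDiff_le {F : ℝ × ℝ → ℂ} {ξ : ℝ × ℝ} {C : ℝ} (hC : 0 ≤ C)
    (hF : ‖F ξ - F (0, ξ.2)‖ ≤ C * |ξ.1|) : ‖divDiff F ξ‖ ≤ C := by
  rw [divDiff, norm_div, norm_mul, Complex.norm_I, one_mul, Complex.norm_real, Real.norm_eq_abs]
  exact div_le_of_le_mul₀ (abs_nonneg _) hC hF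

lemma norm_divDiff_le_of_lipschitzWith {F : ℝ × ℝ → ℂ} {C : ℝ≥0} (hF : LipschitzWith C F)
    (ξ : ℝ × ℝ) : ‖divDiff F ξ‖ ≤ C :=
  norm_divDiff_le C.2 <| by
    simpa [dist_eq_norm, Prod.norm_def] using hF.dist_le_mul ξ (0, ξ.2)

lemma divDiff_eq_zero {c : ℝ} {F : ℝ × ℝ → ℂ} (hF : ∀ ξ ∈ sqIcc c, F ξ = 0) {ξ : ℝ × ℝ}
    (hξ : ξ ∈ sqIcc c) : divDiff F ξ = 0 := by
  have hξ0 : ((0 : ℝ), ξ.2) ∈ sqIcc c := mem_sqIcc.2 ((norm_zero_snd_le ξ).trans (mem_sqIcc.1 hξ))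
  rw [divDiff, hF ξ hξ, hF _ hξ0, sub_zero, zero_div]

lemma xPrimitive_planeWave {ξ : ℝ × ℝ} (hξ : ξ.1 ≠ 0) (x : ℝ × ℝ) :
    xPrimitive (planeWave ξ) x = divDiff (fun η => planeWave η x) ξ := by
  have hsplit (t : ℝ) : planeWave ξ (t, x.2) =
      Complex.exp (Complex.I * ξ.1 * t) * planeWave (0, ξ.2) x := by
    rw [planeWave, planeWave, ← Complex.exp_add]
    congr 1
    push_cast
    ring
  have hξ' : Complex.I * (ξ.1 : ℂ) ≠ 0 := by simpa using hξ
  simp only [xPrimitive, divDiff, hsplit, intervalIntegral.integral_mul_const]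
  rw [integral_exp_mul_complex hξ']
  simp only [Complex.ofReal_zero, mul_zero, Complex.exp_zero]
  ring

lemma norm_divDiff_planeWave_le (ξ x : ℝ × ℝ) : ‖divDiff (fun η => planeWave η x) ξ‖ ≤ |x.1| := by
  by_cases hξ : ξ.1 = 0
  · simp [divDiff, hξ]
  · rw [← xPrimitive_planeWave hξ, ← one_mul |x.1|]
    exact norm_xPrimitive_le fun t _ => (norm_planeWave _ _).le

lemma measurable_divDiff_planeWave :
    Measurable fun z : (ℝ × ℝ) × (ℝ × ℝ) => divDiff (fun η => planeWave η z.2) z.1 := by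
  have h0 : Continuous fun z : (ℝ × ℝ) × (ℝ × ℝ) => planeWave (0, z.1.2) z.2 :=
    continuous_planeWave.comp (by fun_prop : Continuous fun z : (ℝ × ℝ) × (ℝ × ℝ) =>
      (((0 : ℝ), z.1.2), z.2))
  have hden : Continuous fun z : (ℝ × ℝ) × (ℝ × ℝ) => Complex.I * (z.1.1 : ℂ) := by fun_prop
  exact (continuous_planeWave.measurable.sub h0.measurable).div hden.measurable

lemma xPrimitive_synth {φ : ℝ × ℝ → ℂ} (hφ : Integrable φ) (x : ℝ × ℝ) :
    xPrimitive (synth φ) x = ∫ ξ, φ ξ * divDiff (fun η => planeWave η x) ξ := by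
  have : IsFiniteMeasure (volume.restrict (uIoc 0 x.1)) := ⟨by simp [uIoc]⟩
  have hint : Integrable (fun z : ℝ × ℝ × ℝ => φ z.2 * planeWave z.2 (z.1, x.2))
      ((volume.restrict (uIoc 0 x.1)).prod volume) :=
    (hφ.comp_snd _).mul_bdd (c := 1) (by fun_prop) (.of_forall fun z => (norm_planeWave _ _).le)
  calc xPrimitive (synth φ) x
      = ∫ ξ, ∫ t in 0..x.1, φ ξ * planeWave ξ (t, x.2) :=
        (intervalIntegral_integral_swap hint)
    _ = ∫ ξ, φ ξ * divDiff (fun η => planeWave η x) ξ := integral_congr_ae <| by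
        filter_upwards [ae_fst_ne_zero] with ξ hξ
        rw [← xPrimitive_planeWave hξ, intervalIntegral.integral_const_mul, xPrimitive]

lemma divDiff_synth {Ψ : ℝ × ℝ → ℂ} (hΨ : Integrable Ψ) (ξ : ℝ × ℝ) :
    divDiff (synth Ψ) ξ = ∫ x, divDiff (fun η => planeWave η x) ξ * Ψ x := by
  rw [divDiff, synth, synth, ← integral_sub (integrable_mul_planeWave hΨ _)
    (integrable_mul_planeWave hΨ _), ← integral_div]
  congr 1 with x
  rw [divDiff, planeWave_comm x, planeWave_comm x]
  ring

/-- For `Ψ = paperFT ψ` this reads `⟨p̂, ψ⟩ = ∫ φ(ξ) (ψ(ξ₁, ξ₂) - ψ(0, ξ₂)) / (i ξ₁) dξ`, which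
displays both the support and the order of `p̂`. -/
lemma ftFunctional_xPrimitive_synth {φ : ℝ × ℝ → ℂ} (hφ : Integrable φ) (ψ : 𝓢(ℝ × ℝ, ℂ)) :
    ftFunctional (xPrimitive (synth φ)) ψ = ∫ ξ, φ ξ * divDiff ψ ξ := by
  set Ψ := paperFTEquiv ψ with hΨ
  have hint : Integrable (fun z : (ℝ × ℝ) × (ℝ × ℝ) =>
      φ z.1 * (divDiff (fun η => planeWave η z.2) z.1 * Ψ z.2)) (volume.prod volume) := by
    refine (hφ.norm.mul_prod (Ψ.integrable_pow_mul volume 1)).mono' ?_ (.of_forall fun z => ?_)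
    · exact hφ.1.comp_fst.mul (measurable_divDiff_planeWave.aestronglyMeasurable.mul
        (Ψ.continuous.comp continuous_snd).aestronglyMeasurable)
    · rw [norm_mul, norm_mul, pow_one]
      gcongr
      exact (norm_divDiff_planeWave_le _ _).trans (norm_fst_le z.2)
  calc ftFunctional (xPrimitive (synth φ)) ψ
      = ∫ x, ∫ ξ, φ ξ * (divDiff (fun η => planeWave η x) ξ * Ψ x) := by
        simp only [ftFunctional, xPrimitive_synth hφ, ← coe_paperFTEquiv, ← hΨ,
          ← integral_mul_const, mul_assoc]
    _ = ∫ ξ, ∫ x, φ ξ * (divDiff (fun η => planeWave η x) ξ * Ψ x) :=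
        (integral_integral_swap hint).symm
    _ = ∫ ξ, φ ξ * divDiff ψ ξ := by
        simp only [integral_const_mul, ← divDiff_synth Ψ.integrable]
        rw [hΨ, coe_paperFTEquiv, synth_paperFT]

/-- The frequency density of `synth γ * xPrimitive (synth φ)`. -/
def divDiffConv (γ φ : ℝ × ℝ → ℂ) (ζ : ℝ × ℝ) : ℂ :=
  ∫ ξ, φ ξ * divDiff (fun η => γ (ζ - η)) ξ

lemma synth_mul_divDiff_planeWave {γ : ℝ × ℝ → ℂ} (hγ : Integrable γ) (ξ x : ℝ × ℝ) :
    synth γ x * divDiff (fun η => planeWave η x) ξ =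
      synth (fun ζ => divDiff (fun η => γ (ζ - η)) ξ) x := by
  have hint (η : ℝ × ℝ) := integrable_mul_planeWave (hγ.comp_sub_right η) x
  rw [divDiff, mul_div_assoc', mul_sub, synth_mul_planeWave, synth_mul_planeWave, synth, synth,
    ← integral_sub (hint ξ) (hint _), ← integral_div]
  congr 1 with ζ
  simp only [divDiff]
  ring

section divDiffConv

variable {γ φ : ℝ × ℝ → ℂ} {c d : ℝ} {C : ℝ≥0}

lemma divDiff_comp_sub_eq_zero (hγd : ∀ ξ ∉ sqIcc d, γ ξ = 0) {ξ ζ : ℝ × ℝ} (hξ : ξ ∈ sqIcc c)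
    (hζ : ζ ∉ sqIcc (c + d)) : divDiff (fun η => γ (ζ - η)) ξ = 0 := by
  refine divDiff_eq_zero (c := c) (fun η hη => hγd _ fun hmem => hζ ?_) hξ
  rw [mem_sqIcc] at *
  exact (norm_le_norm_add_norm_sub η ζ).trans (add_le_add hη (norm_sub_rev ζ η ▸ hmem))

lemma divDiffConv_eq_zero (hγd : ∀ ξ ∉ sqIcc d, γ ξ = 0) (hφc : ∀ ξ ∉ sqIcc c, φ ξ = 0)
    {ζ : ℝ × ℝ} (hζ : ζ ∉ sqIcc (c + d)) : divDiffConv γ φ ζ = 0 := by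
  refine integral_eq_zero_of_ae (.of_forall fun ξ => ?_)
  by_cases hξ : ξ ∈ sqIcc c
  · simp only [divDiff_comp_sub_eq_zero hγd hξ hζ, mul_zero, Pi.zero_apply]
  · simp only [hφc ξ hξ, zero_mul, Pi.zero_apply]

lemma norm_mul_divDiff_comp_sub_le (hγ : LipschitzWith C γ) (hγd : ∀ ξ ∉ sqIcc d, γ ξ = 0)
    (hφc : ∀ ξ ∉ sqIcc c, φ ξ = 0) (ξ ζ : ℝ × ℝ) :
    ‖φ ξ * divDiff (fun η => γ (ζ - η)) ξ‖ ≤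
      ‖φ ξ‖ * (sqIcc (c + d)).indicator (fun _ => (C : ℝ)) ζ := by
  by_cases hξ : ξ ∈ sqIcc c
  · rw [norm_mul]
    gcongr
    by_cases hζ : ζ ∈ sqIcc (c + d)
    · rw [indicator_of_mem hζ]
      have hγζ : LipschitzWith C fun η => γ (ζ - η) := .of_dist_le_mul fun η η' =>
        (hγ.dist_le_mul _ _).trans_eq (by rw [dist_sub_left])
      exact norm_divDiff_le_of_lipschitzWith hγζ ξ
    · rw [indicator_of_notMem hζ, divDiff_comp_sub_eq_zero hγd hξ hζ, norm_zero]
  · simp [hφc ξ hξ]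

lemma integrable_divDiffConv_kernel (hγ : LipschitzWith C γ) (hγd : ∀ ξ ∉ sqIcc d, γ ξ = 0)
    (hφ : Integrable φ) (hφc : ∀ ξ ∉ sqIcc c, φ ξ = 0) :
    Integrable (fun z : (ℝ × ℝ) × (ℝ × ℝ) => φ z.1 * divDiff (fun η => γ (z.2 - η)) z.1)
      (volume.prod volume) := by
  have hbound : Integrable ((sqIcc (c + d)).indicator fun _ => (C : ℝ)) :=
    (integrable_indicator_iff (isCompact_sqIcc _).measurableSet).2
      (integrableOn_const (isCompact_sqIcc _).measure_lt_top.ne)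
  have hnum : Continuous fun z : (ℝ × ℝ) × (ℝ × ℝ) => γ (z.2 - z.1) - γ (z.2 - (0, z.1.2)) :=
    (hγ.continuous.comp (by fun_prop)).sub (hγ.continuous.comp (by fun_prop))
  have hden : Continuous fun z : (ℝ × ℝ) × (ℝ × ℝ) => Complex.I * (z.1.1 : ℂ) := by fun_prop
  exact (hφ.norm.mul_prod hbound).mono'
    (hφ.1.comp_fst.mul (hnum.measurable.div hden.measurable).aestronglyMeasurable)
    (.of_forall fun z => norm_mul_divDiff_comp_sub_le hγ hγd hφc z.1 z.2)

lemma integrable_divDiffConv (hγ : LipschitzWith C γ) (hγd : ∀ ξ ∉ sqIcc d, γ ξ = 0)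
    (hφ : Integrable φ) (hφc : ∀ ξ ∉ sqIcc c, φ ξ = 0) : Integrable (divDiffConv γ φ) :=
  (integrable_divDiffConv_kernel hγ hγd hφ hφc).integral_prod_right

lemma integrable_of_lipschitzWith_of_eq_zero (hγ : LipschitzWith C γ)
    (hγd : ∀ ξ ∉ sqIcc d, γ ξ = 0) : Integrable γ :=
  hγ.continuous.integrable_of_hasCompactSupport (.intro (isCompact_sqIcc d) hγd)

lemma synth_mul_xPrimitive_synth (hγ : LipschitzWith C γ) (hγd : ∀ ξ ∉ sqIcc d, γ ξ = 0)
    (hφ : Integrable φ) (hφc : ∀ ξ ∉ sqIcc c, φ ξ = 0) (x : ℝ × ℝ) :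
    synth γ x * xPrimitive (synth φ) x = synth (divDiffConv γ φ) x := by
  have hγint := integrable_of_lipschitzWith_of_eq_zero hγ hγd
  have hint : Integrable (fun z : (ℝ × ℝ) × (ℝ × ℝ) =>
      φ z.1 * divDiff (fun η => γ (z.2 - η)) z.1 * planeWave z.2 x) (volume.prod volume) :=
    (integrable_divDiffConv_kernel hγ hγd hφ hφc).mul_bdd (c := 1) (by fun_prop)
      (.of_forall fun z => (norm_planeWave _ _).le)
  calc synth γ x * xPrimitive (synth φ) x
      = ∫ ξ, φ ξ * (synth γ x * divDiff (fun η => planeWave η x) ξ) := by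
        rw [xPrimitive_synth hφ, ← integral_const_mul]
        simp only [mul_left_comm]
    _ = ∫ ξ, ∫ ζ, φ ξ * divDiff (fun η => γ (ζ - η)) ξ * planeWave ζ x := by
        simp only [synth_mul_divDiff_planeWave hγint, mul_assoc, integral_const_mul]
        rfl
    _ = ∫ ζ, ∫ ξ, φ ξ * divDiff (fun η => γ (ζ - η)) ξ * planeWave ζ x :=
        integral_integral_swap hint
    _ = synth (divDiffConv γ φ) x := by simp only [synth, divDiffConv, integral_mul_const]

end divDiffConv

lemma norm_sub_le_of_norm_pd1_le {F : ℝ × ℝ → ℂ} {B : ℝ} (hF : Differentiable ℝ F)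
    (hB : ∀ ξ, ‖pd1 F ξ‖ ≤ B) (x x' y : ℝ) : ‖F (x, y) - F (x', y)‖ ≤ B * |x - x'| :=
  convex_univ.norm_image_sub_le_of_norm_hasDerivWithin_le (f := fun t => F (t, y))
    (fun t _ => (hasDerivAt_pd1 (z := (t, y)) (hF _)).hasDerivWithinAt) (fun t _ => hB (t, y))
    (mem_univ x') (mem_univ x)

lemma pd1_eq_zero_of_notMem_tsupport {F : ℝ × ℝ → ℂ} {ξ : ℝ × ℝ} (hξ : ξ ∉ tsupport F) :
    pd1 F ξ = 0 := by
  rw [pd1, fderiv_of_notMem_tsupport (𝕜 := ℝ) hξ, zero_apply]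

/-- `W` is the Fourier synthesis of an integrable frequency density supported in `[-c, c]²`. -/
def IsBandlimited (c : ℝ) (W : ℝ × ℝ → ℂ) : Prop :=
  ∃ φ : ℝ × ℝ → ℂ, Integrable φ ∧ (∀ ξ ∉ sqIcc c, φ ξ = 0) ∧ W = synth φ

namespace IsBandlimited

variable {c d : ℝ} {V W : ℝ × ℝ → ℂ}

lemma mono (hW : IsBandlimited c W) (hcd : c ≤ d) : IsBandlimited d W := by
  obtain ⟨φ, hφ, hφc, rfl⟩ := hW
  exact ⟨φ, hφ, fun ξ hξ => hφc ξ fun h => hξ (mem_sqIcc.2 ((mem_sqIcc.1 h).trans hcd)), rfl⟩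

lemma const_mul (a : ℂ) (hW : IsBandlimited c W) : IsBandlimited c fun x => a * W x := by
  obtain ⟨φ, hφ, hφc, rfl⟩ := hW
  exact ⟨_, hφ.const_mul a, fun ξ hξ => by rw [hφc ξ hξ, mul_zero], (synth_const_mul a φ).symm⟩

lemma sum {ι : Type*} {s : Finset ι} {W : ι → ℝ × ℝ → ℂ} (hW : ∀ i ∈ s, IsBandlimited c (W i)) :
    IsBandlimited c fun x => ∑ i ∈ s, W i x := by
  choose! φ hφ hφc hWφ using hW
  refine ⟨fun ξ => ∑ i ∈ s, φ i ξ, integrable_finsetSum s hφ,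
    fun ξ hξ => Finset.sum_eq_zero fun i hi => hφc i hi ξ hξ, ?_⟩
  ext x
  simp only [synth, Finset.sum_mul]
  rw [integral_finsetSum s fun i hi => integrable_mul_planeWave (hφ i hi) x]
  exact Finset.sum_congr rfl fun i hi => congrFun (hWφ i hi) x

lemma synth_mul_xPrimitive {γ : ℝ × ℝ → ℂ} {C : ℝ≥0} (hγ : LipschitzWith C γ)
    (hγd : ∀ ξ ∉ sqIcc d, γ ξ = 0) (hW : IsBandlimited c W) :
    IsBandlimited (c + d) fun x => synth γ x * xPrimitive W x := by
  obtain ⟨φ, hφ, hφc, rfl⟩ := hW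
  exact ⟨divDiffConv γ φ, integrable_divDiffConv hγ hγd hφ hφc,
    fun ζ hζ => divDiffConv_eq_zero hγd hφc hζ,
    funext (synth_mul_xPrimitive_synth hγ hγd hφ hφc)⟩

lemma contDiff (hW : IsBandlimited c W) : ContDiff ℝ ∞ W := by
  obtain ⟨φ, hφ, hφc, rfl⟩ := hW
  refine contDiff_synth fun n => (hφ.norm.const_mul (c ^ n)).mono'
    ((continuous_norm.pow n).aestronglyMeasurable.mul hφ.1.norm) (.of_forall fun ξ => ?_)
  by_cases hξ : ξ ∈ sqIcc c
  · rw [norm_mul, norm_pow, norm_norm, norm_norm]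
    gcongr
    exact mem_sqIcc.1 hξ
  · simp [hφc ξ hξ]

lemma polyGrowth_xPrimitive (hW : IsBandlimited c W) : PolyGrowth (xPrimitive W) := by
  obtain ⟨φ, -, -, rfl⟩ := hW
  refine ⟨∫ ξ, ‖φ ξ‖, 1, fun z => (norm_xPrimitive_le fun t _ => norm_synth_le φ _).trans ?_⟩
  rw [pow_one]
  gcongr
  linarith [norm_fst_le z, Real.norm_eq_abs z.1]

lemma funcOrderAtMost_ftFunctional_xPrimitive (hW : IsBandlimited c W) :
    funcOrderAtMost (ftFunctional (xPrimitive W)) 1 := by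
  obtain ⟨φ, hφ, -, rfl⟩ := hW
  refine fun K _ => ⟨∫ ξ, ‖φ ξ‖, fun ψ hψ B hB0 hB => ?_⟩
  have hpd1 (ξ : ℝ × ℝ) : ‖pd1 ψ ξ‖ ≤ B := by
    by_cases hξ : ξ ∈ tsupport ψ
    · exact hB (1, 0) le_rfl ξ (hψ hξ)
    · rwa [pd1_eq_zero_of_notMem_tsupport hξ, norm_zero]
  have hdivDiff (ξ : ℝ × ℝ) : ‖divDiff ψ ξ‖ ≤ B := norm_divDiff_le hB0 <| by
    simpa using norm_sub_le_of_norm_pd1_le ψ.differentiable hpd1 ξ.1 0 ξ.2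
  rw [ftFunctional_xPrimitive_synth hφ, ← integral_mul_const]
  refine norm_integral_le_of_norm_le (hφ.norm.mul_const B) (.of_forall fun ξ => ?_)
  rw [norm_mul]
  gcongr
  exact hdivDiff ξ

lemma funcSupport_ftFunctional_xPrimitive_subset (hW : IsBandlimited c W) :
    funcSupport (ftFunctional (xPrimitive W)) ⊆ sqIcc c := by
  obtain ⟨φ, hφ, hφc, rfl⟩ := hW
  refine compl_subset_comm.1 (subset_sUnion_of_mem
    ⟨(isCompact_sqIcc c).isClosed.isOpen_compl, fun ψ hψ => ?_⟩)
  rw [ftFunctional_xPrimitive_synth hφ]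
  refine integral_eq_zero_of_ae (.of_forall fun ξ => ?_)
  by_cases hξ : ξ ∈ sqIcc c
  · have hψ0 : ∀ η ∈ sqIcc c, ψ η = 0 := fun η hη =>
      image_eq_zero_of_notMem_tsupport fun h => hψ h hη
    simp only [divDiff_eq_zero hψ0 hξ, mul_zero, Pi.zero_apply]
  · simp only [hφc ξ hξ, zero_mul, Pi.zero_apply]

end IsBandlimited

lemma mem_unitSq {z : ℝ × ℝ} : z ∈ unitSq ↔ ‖z‖ ≤ 1 := mem_sqIcc

lemma norm_xPrimitive_le_of_unitSq {W : ℝ × ℝ → ℂ} {B : ℝ} (hW : ∀ z ∈ unitSq, ‖W z‖ ≤ B) :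
    ∀ z ∈ unitSq, ‖xPrimitive W z‖ ≤ B := by
  intro z hz
  have hz1 : |z.1| ≤ 1 := (norm_fst_le z).trans (mem_unitSq.1 hz)
  have hslice : ∀ t ∈ uIcc 0 z.1, (t, z.2) ∈ unitSq := fun t ht => mem_unitSq.2 <|
    norm_prod_le_iff.2 ⟨by simpa using (abs_sub_left_of_mem_uIcc ht).trans (by simpa using hz1),
      (norm_snd_le z).trans (mem_unitSq.1 hz)⟩
  have hB : 0 ≤ B := (norm_nonneg _).trans (hW z hz)
  calc ‖xPrimitive W z‖ ≤ B * |z.1| := norm_xPrimitive_le fun t ht => hW _ (hslice t ht)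
    _ ≤ B := mul_le_of_le_one_right hB hz1

/-- The terms of the Neumann series for `u + i V ∫₀ˣ u = F`, the equation satisfied by the
derivative `u = ∂p/∂x` of a solution of the Levin equation `∂p/∂x + i V p = F`. -/
def levinTerm (F V : ℝ × ℝ → ℂ) : ℕ → ℝ × ℝ → ℂ
  | 0 => F
  | k + 1 => fun z => -Complex.I * (V z * xPrimitive (levinTerm F V k) z)

/-- The partial sum `∑ k ≤ n` of the Neumann series with terms `levinTerm`. -/
def levinSum (F V : ℝ × ℝ → ℂ) (n : ℕ) (z : ℝ × ℝ) : ℂ :=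
  ∑ k ∈ Finset.range (n + 1), levinTerm F V k z

section Neumann

variable {F V : ℝ × ℝ → ℂ}

lemma contDiff_levinTerm (hF : ContDiff ℝ ∞ F) (hV : ContDiff ℝ ∞ V) :
    ∀ k, ContDiff ℝ ∞ (levinTerm F V k)
  | 0 => hF
  | k + 1 => contDiff_const.mul (hV.mul (contDiff_xPrimitive (contDiff_levinTerm hF hV k)))

lemma contDiff_levinSum (hF : ContDiff ℝ ∞ F) (hV : ContDiff ℝ ∞ V) (n : ℕ) :
    ContDiff ℝ ∞ (levinSum F V n) :=
  .sum fun k _ => contDiff_levinTerm hF hV k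

lemma pd1_xPrimitive_levinSum (hF : ContDiff ℝ ∞ F) (hV : ContDiff ℝ ∞ V) (n : ℕ) :
    pd1 (xPrimitive (levinSum F V n)) = levinSum F V n :=
  pd1_xPrimitive ((contDiff_levinSum hF hV n).of_le (by simp))

lemma levinSum_add_mul_xPrimitive (hF : ContDiff ℝ ∞ F) (hV : ContDiff ℝ ∞ V) (n : ℕ)
    (z : ℝ × ℝ) :
    levinSum F V n z + Complex.I * V z * xPrimitive (levinSum F V n) z =
      F z - levinTerm F V (n + 1) z := by
  have hprim : xPrimitive (levinSum F V n) =
      fun z => ∑ k ∈ Finset.range (n + 1), xPrimitive (levinTerm F V k) z :=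
    xPrimitive_sum _ fun k _ => (contDiff_levinTerm hF hV k).continuous
  rw [hprim, levinSum, Finset.mul_sum, ← Finset.sum_add_distrib]
  calc ∑ k ∈ Finset.range (n + 1),
        (levinTerm F V k z + Complex.I * V z * xPrimitive (levinTerm F V k) z)
      = ∑ k ∈ Finset.range (n + 1), (levinTerm F V k z - levinTerm F V (k + 1) z) :=
        Finset.sum_congr rfl fun k _ => by rw [levinTerm]; ring
    _ = F z - levinTerm F V (n + 1) z := Finset.sum_range_sub' (levinTerm F V · z) (n + 1)

lemma isBandlimited_levinTerm {γ : ℝ × ℝ → ℂ} {C : ℝ≥0} {c d : ℝ} (hF : IsBandlimited c F)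
    (hγ : LipschitzWith C γ) (hγd : ∀ ξ ∉ sqIcc d, γ ξ = 0) :
    ∀ k : ℕ, IsBandlimited (c + k * d) (levinTerm F (synth γ) k)
  | 0 => by simpa [levinTerm] using hF
  | k + 1 => by
    refine .const_mul _ ?_
    convert (isBandlimited_levinTerm hF hγ hγd k).synth_mul_xPrimitive hγ hγd using 1
    push_cast
    ring

lemma isBandlimited_levinSum {γ : ℝ × ℝ → ℂ} {C : ℝ≥0} {c d : ℝ} (hF : IsBandlimited c F)
    (hγ : LipschitzWith C γ) (hd : 0 ≤ d) (hγd : ∀ ξ ∉ sqIcc d, γ ξ = 0) (n : ℕ) :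
    IsBandlimited (c + n * d) (levinSum F (synth γ) n) :=
  .sum fun k hk => (isBandlimited_levinTerm hF hγ hγd k).mono <| by
    gcongr
    exact Finset.mem_range_succ_iff.1 hk

variable {A q : ℝ}

lemma norm_levinTerm_le (hF : ∀ z ∈ unitSq, ‖F z‖ ≤ A) (hV : ∀ z ∈ unitSq, ‖V z‖ ≤ q) :
    ∀ k, ∀ z ∈ unitSq, ‖levinTerm F V k z‖ ≤ A * q ^ k
  | 0, z, hz => by simpa [levinTerm] using hF z hz
  | k + 1, z, hz => calc
      ‖levinTerm F V (k + 1) z‖ = ‖V z‖ * ‖xPrimitive (levinTerm F V k) z‖ := by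
        rw [levinTerm, norm_mul, norm_neg, Complex.norm_I, one_mul, norm_mul]
      _ ≤ q * (A * q ^ k) := by
        gcongr
        · exact (norm_nonneg _).trans (hV z hz)
        · exact hV z hz
        · exact norm_xPrimitive_le_of_unitSq (norm_levinTerm_le hF hV k) z hz
      _ = A * q ^ (k + 1) := by ring

lemma norm_levinSum_le (hF : ∀ z ∈ unitSq, ‖F z‖ ≤ A) (hV : ∀ z ∈ unitSq, ‖V z‖ ≤ q)
    (hq : q < 1) (n : ℕ) : ∀ z ∈ unitSq, ‖levinSum F V n z‖ ≤ A / (1 - q) := by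
  intro z hz
  have hA : 0 ≤ A := (norm_nonneg _).trans (hF z hz)
  have hq0 : 0 ≤ q := (norm_nonneg _).trans (hV z hz)
  calc ‖levinSum F V n z‖ ≤ ∑ k ∈ Finset.range (n + 1), A * q ^ k :=
        norm_sum_le_of_le _ fun k _ => norm_levinTerm_le hF hV k z hz
    _ = A * ∑ k ∈ Finset.range (n + 1), q ^ k := (Finset.mul_sum ..).symm
    _ ≤ A * (1 - q)⁻¹ := by
        gcongr
        exact (tsum_geometric_of_lt_one hq0 hq) ▸
          (summable_geometric_of_lt_one hq0 hq).sum_le_tsum _ fun k _ => pow_nonneg hq0 k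
    _ = A / (1 - q) := (div_eq_mul_inv _ _).symm

end Neumann

section Density

variable {E F : Type*} [NormedAddCommGroup E] [NormedSpace ℝ E] [NormedAddCommGroup F]
  [NormedSpace ℝ F]

lemma exists_norm_iteratedFDeriv_le_mul_norm {g : E → F} {i : ℕ} {C : ℝ}
    (hC : ∀ x, ‖iteratedFDeriv ℝ i g x‖ ≤ C) (h0 : g =ᶠ[𝓝 0] 0) :
    ∃ M, 0 ≤ M ∧ ∀ x, ‖iteratedFDeriv ℝ i g x‖ ≤ M * ‖x‖ := by
  obtain ⟨r, hr, hball⟩ := Metric.eventually_nhds_iff_ball.1 (h0.iteratedFDeriv ℝ i)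
  have hC0 : 0 ≤ C := (norm_nonneg _).trans (hC 0)
  refine ⟨C / r, by positivity, fun x => ?_⟩
  rcases lt_or_ge ‖x‖ r with hx | hx
  · have : iteratedFDeriv ℝ i g x = 0 := by
      simpa using hball x (mem_ball_zero_iff.2 hx)
    rw [this, norm_zero]
    positivity
  · calc ‖iteratedFDeriv ℝ i g x‖ ≤ C / r * r := by simpa [hr.ne'] using hC x
      _ ≤ C / r * ‖x‖ := by gcongr

lemma exists_norm_iteratedFDeriv_sub_one_le {χ : 𝓢(E, ℝ)} (hχ : χ =ᶠ[𝓝 0] 1) (i : ℕ) :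
    ∃ M, 0 ≤ M ∧ ∀ x, ‖iteratedFDeriv ℝ i (fun y => χ y - 1) x‖ ≤ M * ‖x‖ := by
  refine exists_norm_iteratedFDeriv_le_mul_norm (C := SchwartzMap.seminorm ℝ 0 i χ + 1)
    (fun x => ?_) (hχ.mono fun x hx => by simp [hx])
  have h1 : ‖iteratedFDeriv ℝ i (fun _ : E => (1 : ℝ)) x‖ ≤ 1 := by
    rcases eq_or_ne i 0 with rfl | hi
    · simp
    · simp [iteratedFDeriv_const_of_ne hi]
  rw [fun_iteratedFDeriv_sub_apply (χ.smooth i).contDiffAt contDiffAt_const]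
  exact norm_sub_le_of_le (SchwartzMap.norm_iteratedFDeriv_le_seminorm ℝ χ i x) h1

lemma norm_iteratedFDeriv_comp_smul_le {g : E → F} (hg : ContDiff ℝ ∞ g) {i : ℕ} {M : ℝ}
    (hM : ∀ x, ‖iteratedFDeriv ℝ i g x‖ ≤ M * ‖x‖) {δ : ℝ} (hδ : |δ| ≤ 1) (x : E) :
    ‖iteratedFDeriv ℝ i (fun y => g (δ • y)) x‖ ≤ |δ| * (M * ‖x‖) := by
  rw [iteratedFDeriv_comp_const_smul δ (hg.of_le (mod_cast le_top)), norm_smul, norm_pow,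
    Real.norm_eq_abs]
  calc |δ| ^ i * ‖iteratedFDeriv ℝ i g (δ • x)‖
      ≤ 1 * (M * ‖δ • x‖) := by
        gcongr
        · exact pow_le_one₀ (abs_nonneg δ) hδ
        · exact hM _
    _ = |δ| * (M * ‖x‖) := by rw [norm_smul, Real.norm_eq_abs]; ring

/-- One factor `‖x‖`, absorbed by the decay of `φ`, is traded for the small factor `δ`. -/
lemma seminorm_smulLeftCLM_comp_smul_le {g : E → ℝ} (hg : g.HasTemperateGrowth)
    {M : ℕ → ℝ} (hM : ∀ i, 0 ≤ M i ∧ ∀ x, ‖iteratedFDeriv ℝ i g x‖ ≤ M i * ‖x‖)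
    (φ : 𝓢(E, F)) (k n : ℕ) {δ : ℝ} (hδ : |δ| ≤ 1) :
    SchwartzMap.seminorm ℝ k n (SchwartzMap.smulLeftCLM F (fun x => g (δ • x)) φ) ≤
      |δ| * ∑ i ∈ Finset.range (n + 1),
        n.choose i * (M i * SchwartzMap.seminorm ℝ (k + 1) (n - i) φ) := by
  have hgδ : (fun x => g (δ • x)).HasTemperateGrowth := by fun_prop
  have hM0 (i) : 0 ≤ M i := (hM i).1
  have hbound : 0 ≤ |δ| * ∑ i ∈ Finset.range (n + 1),
      n.choose i * (M i * SchwartzMap.seminorm ℝ (k + 1) (n - i) φ) :=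
    mul_nonneg (abs_nonneg δ) <| Finset.sum_nonneg fun i _ =>
      mul_nonneg (Nat.cast_nonneg _) (mul_nonneg (hM0 i) (apply_nonneg _ φ))
  refine SchwartzMap.seminorm_le_bound ℝ k n _ hbound fun x => ?_
  rw [SchwartzMap.smulLeftCLM_apply hgδ]
  calc ‖x‖ ^ k * ‖iteratedFDeriv ℝ n (fun y => g (δ • y) • φ y) x‖
      ≤ ‖x‖ ^ k * ∑ i ∈ Finset.range (n + 1), n.choose i *
          ‖iteratedFDeriv ℝ i (fun y => g (δ • y)) x‖ * ‖iteratedFDeriv ℝ (n - i) φ x‖ := by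
        gcongr
        exact norm_iteratedFDeriv_smul_le hgδ.1 φ.smooth' x (mod_cast le_top)
    _ ≤ ‖x‖ ^ k * ∑ i ∈ Finset.range (n + 1), n.choose i *
          (|δ| * (M i * ‖x‖)) * ‖iteratedFDeriv ℝ (n - i) φ x‖ := by
        gcongr with i
        exact norm_iteratedFDeriv_comp_smul_le hg.1 (hM i).2 hδ x
    _ = |δ| * ∑ i ∈ Finset.range (n + 1),
          n.choose i * (M i * (‖x‖ ^ (k + 1) * ‖iteratedFDeriv ℝ (n - i) φ x‖)) := by
        rw [Finset.mul_sum, Finset.mul_sum]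
        congr 1 with i
        ring
    _ ≤ _ := by
        gcongr with i
        · exact hM0 i
        · exact SchwartzMap.le_seminorm ℝ (k + 1) (n - i) φ x

lemma tendsto_smulLeftCLM_comp_smul {χ : 𝓢(E, ℝ)} (hχ : χ =ᶠ[𝓝 0] 1) (φ : 𝓢(E, F)) :
    Tendsto (fun δ : ℝ => SchwartzMap.smulLeftCLM F (fun x => χ (δ • x)) φ) (𝓝 0) (𝓝 φ) := by
  rw [(schwartz_withSeminorms ℝ E F).tendsto_nhds]
  rintro ⟨k, n⟩ τ hτ
  choose M hM using exists_norm_iteratedFDeriv_sub_one_le hχ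
  have hg : (fun x => χ x - 1).HasTemperateGrowth := by fun_prop
  have hlim : Tendsto (fun δ : ℝ => |δ| * ∑ i ∈ Finset.range (n + 1),
      n.choose i * (M i * SchwartzMap.seminorm ℝ (k + 1) (n - i) φ)) (𝓝 0) (𝓝 0) := by
    simpa using (continuous_abs.tendsto (0 : ℝ)).mul_const _
  filter_upwards [hlim.eventually_lt_const hτ, Metric.closedBall_mem_nhds 0 one_pos] with δ hδ hδ1
  have hsub : SchwartzMap.smulLeftCLM F (fun x => χ (δ • x)) φ - φ =
      SchwartzMap.smulLeftCLM F (fun x => χ (δ • x) - 1) φ := by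
    ext x
    simp [SchwartzMap.smulLeftCLM_apply_apply (g := fun x => χ (δ • x)) (by fun_prop),
      SchwartzMap.smulLeftCLM_apply_apply (g := fun x => χ (δ • x) - 1) (by fun_prop), sub_smul]
  rw [hsub]
  refine (seminorm_smulLeftCLM_comp_smul_le hg hM φ k n ?_).trans_lt hδ
  simpa using hδ1

theorem dense_hasCompactSupport_schwartzMap [FiniteDimensional ℝ E] :
    Dense {φ : 𝓢(E, F) | HasCompactSupport φ} := by
  intro φ
  let b : ContDiffBump (0 : E) := ⟨1, 2, one_pos, one_lt_two⟩
  let χ : 𝓢(E, ℝ) := b.hasCompactSupport.toSchwartzMap b.contDiff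
  have hχ : χ =ᶠ[𝓝 0] 1 := b.eventuallyEq_one
  refine mem_closure_of_tendsto
    ((tendsto_smulLeftCLM_comp_smul hχ φ).mono_left (nhdsWithin_le_nhds (s := {0}ᶜ))) ?_
  filter_upwards [self_mem_nhdsWithin] with δ hδ
  have hχδ : HasCompactSupport fun x => χ (δ • x) := b.hasCompactSupport.comp_smul hδ
  exact hχδ.of_isClosed_subset (isClosed_tsupport _)
    ((SchwartzMap.tsupport_smulLeftCLM_subset _ _).trans inter_subset_right)

end Density

lemma eventually_forall_norm_sub_lt (T : 𝓢(ℝ × ℝ, ℂ) →L[ℂ] 𝓢(ℝ × ℝ, ℂ)) (Ψ : 𝓢(ℝ × ℝ, ℂ)) {τ : ℝ}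
    (hτ : 0 < τ) : ∀ᶠ Φ in 𝓝 Ψ, ∀ x, ‖T Φ x - T Ψ x‖ < τ := by
  let L := SchwartzMap.toBoundedContinuousFunctionCLM ℂ (ℝ × ℝ) ℂ ∘L T
  filter_upwards [L.continuous.continuousAt.eventually (Metric.ball_mem_nhds (L Ψ) hτ)] with Φ hΦ x
  rw [← dist_eq_norm]
  exact (BoundedContinuousFunction.dist_coe_le_dist x).trans_lt hΦ

/-- The multi-index derivative `mderiv2` as a continuous operator on Schwartz space. -/
def mderiv2CLM (α : ℕ × ℕ) : 𝓢(ℝ × ℝ, ℂ) →L[ℂ] 𝓢(ℝ × ℝ, ℂ) :=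
  LineDeriv.lineDerivOpCLM ℂ 𝓢(ℝ × ℝ, ℂ) ((1, 0) : ℝ × ℝ) ^ α.1 *
    LineDeriv.lineDerivOpCLM ℂ 𝓢(ℝ × ℝ, ℂ) ((0, 1) : ℝ × ℝ) ^ α.2

lemma coe_mderiv2CLM (α : ℕ × ℕ) (Φ : 𝓢(ℝ × ℝ, ℂ)) : ⇑(mderiv2CLM α Φ) = mderiv2 α Φ := by
  have hiter (v : ℝ × ℝ) (k : ℕ) (Ψ : 𝓢(ℝ × ℝ, ℂ)) :
      ⇑((LineDeriv.lineDerivOpCLM ℂ 𝓢(ℝ × ℝ, ℂ) v ^ k) Ψ) =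
        (fun F z => fderiv ℝ F z v)^[k] Ψ := by
    induction k with
    | zero => rfl
    | succ k ih =>
      rw [pow_succ', Function.iterate_succ_apply', ← ih]
      rfl
  rw [mderiv2CLM, mul_apply_eq_comp, hiter, hiter]
  rfl

lemma exists_hasCompactSupport_near (Ψ : 𝓢(ℝ × ℝ, ℂ)) {τ : ℝ} (hτ : 0 < τ) :
    ∃ Φ : 𝓢(ℝ × ℝ, ℂ), HasCompactSupport Φ ∧ (∀ x, ‖synth Φ x - synth Ψ x‖ < τ) ∧
      ∀ α : ℕ × ℕ, α.1 + α.2 ≤ 2 → ∀ ξ, ‖mderiv2 α Φ ξ - mderiv2 α Ψ ξ‖ < τ := by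
  have hfin : {α : ℕ × ℕ | α.1 + α.2 ≤ 2}.Finite :=
    (finite_Iic (2, 2)).subset fun α hα => by
      have : α.1 + α.2 ≤ 2 := hα
      exact ⟨by lia, by lia⟩
  have hsynth := eventually_forall_norm_sub_lt paperFTEquiv.symm.toContinuousLinearMap Ψ hτ
  have hderiv := hfin.eventually_all.2 fun α _ => eventually_forall_norm_sub_lt (mderiv2CLM α) Ψ hτ
  obtain ⟨Φ, hΦ, hs, hd⟩ :=
    ((mem_closure_iff_frequently.1 (dense_hasCompactSupport_schwartzMap Ψ)).and_eventually
      (hsynth.and hderiv)).exists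
  refine ⟨Φ, hΦ, fun x => ?_, fun α hα ξ => ?_⟩
  · simpa only [ContinuousLinearEquiv.coe_coe, coe_paperFTEquiv_symm] using hs x
  · simpa only [coe_mderiv2CLM] using hd α hα ξ

lemma paperFT_eq_synth_comp_neg (f : ℝ × ℝ → ℂ) :
    paperFT f = synth fun x => 1 / (4 * (π : ℂ) ^ 2) * f (-x) := by
  ext ξ
  rw [paperFT_eq_synth_neg, synth_const_mul]
  simp only [synth]
  rw [← integral_neg_eq_self]
  simp only [planeWave, Prod.fst_neg, Prod.snd_neg, neg_mul_neg]

section CompactlySupportedDensity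

variable {φ : ℝ × ℝ → ℂ}

lemma iterate_fderiv_synth (hφ : Continuous φ) (hs : HasCompactSupport φ) (v : ℝ × ℝ) (k : ℕ) :
    (fun F z => fderiv ℝ F z v)^[k] (synth φ) =
      synth fun ξ => (Complex.I * ((ξ.1 * v.1 + ξ.2 * v.2 : ℝ) : ℂ)) ^ k * φ ξ := by
  induction k with
  | zero => simp
  | succ k ih =>
    have hc : Continuous fun ξ : ℝ × ℝ =>
        (Complex.I * ((ξ.1 * v.1 + ξ.2 * v.2 : ℝ) : ℂ)) ^ k * φ ξ := by fun_prop
    have hm : Continuous fun ξ : ℝ × ℝ =>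
        ‖ξ‖ * ‖(Complex.I * ((ξ.1 * v.1 + ξ.2 * v.2 : ℝ) : ℂ)) ^ k * φ ξ‖ := by fun_prop
    rw [Function.iterate_succ_apply', ih]
    ext x
    rw [fderiv_synth_apply (hc.integrable_of_hasCompactSupport hs.mul_left)
      (hm.integrable_of_hasCompactSupport hs.mul_left.norm.mul_left)]
    congr 1 with ξ
    ring

lemma mderiv2_synth (hφ : Continuous φ) (hs : HasCompactSupport φ) (α : ℕ × ℕ) :
    mderiv2 α (synth φ) =
      synth fun ξ => (Complex.I * ξ.1) ^ α.1 * ((Complex.I * ξ.2) ^ α.2 * φ ξ) := by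
  have h2 : pd2^[α.2] (synth φ) = synth fun ξ => (Complex.I * ξ.2) ^ α.2 * φ ξ  :=
    (iterate_fderiv_synth hφ hs (0, 1) α.2).trans (by simp)
  have hc : Continuous fun ξ : ℝ × ℝ => (Complex.I * ξ.2) ^ α.2 * φ ξ := by fun_prop
  rw [mderiv2, h2]
  exact (iterate_fderiv_synth hc hs.mul_left (1, 0) α.1).trans (by simp)

lemma norm_synth_le_of_sqIcc {R M : ℝ} (hR : 0 ≤ R) (hz : ∀ ξ ∉ sqIcc R, φ ξ = 0)
    (hb : ∀ ξ ∈ sqIcc R, ‖φ ξ‖ ≤ M) (x : ℝ × ℝ) : ‖synth φ x‖ ≤ M * (2 * R) ^ 2 := by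
  have hvol : volume.real (sqIcc R) = (2 * R) ^ 2 := by
    rw [sqIcc, ← Icc_prod_Icc, Measure.volume_eq_prod, measureReal_prod_prod,
      Real.volume_real_Icc_of_le (by linarith)]
    ring
  rw [synth, ← setIntegral_eq_integral_of_forall_compl_eq_zero (s := sqIcc R)
    fun ξ hξ => by rw [hz ξ hξ, zero_mul], ← hvol]
  refine norm_setIntegral_le_of_norm_le_const (isCompact_sqIcc R).measure_lt_top fun ξ hξ => ?_
  rw [norm_mul, norm_planeWave, mul_one]
  exact hb ξ hξ

lemma norm_mderiv2_synth_le {R M : ℝ} (hR : 0 ≤ R) (hφ : Continuous φ)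
    (hz : ∀ ξ ∉ sqIcc R, φ ξ = 0) (hb : ∀ ξ, ‖φ ξ‖ ≤ M) (α : ℕ × ℕ) (x : ℝ × ℝ) :
    ‖mderiv2 α (synth φ) x‖ ≤ R ^ (α.1 + α.2) * M * (2 * R) ^ 2 := by
  rw [mderiv2_synth hφ (.intro (isCompact_sqIcc R) hz)]
  refine norm_synth_le_of_sqIcc hR (fun ξ hξ => by rw [hz ξ hξ, mul_zero, mul_zero])
    (fun ξ hξ => ?_) x
  have hξR := mem_sqIcc.1 hξ
  rw [norm_mul, norm_mul, norm_pow, norm_pow, norm_mul, norm_mul, Complex.norm_I, one_mul, one_mul,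
    Complex.norm_real, Complex.norm_real, pow_add, mul_assoc]
  gcongr
  · exact (norm_fst_le ξ).trans hξR
  · exact (norm_snd_le ξ).trans hξR
  · exact hb ξ

lemma norm_mderiv2_paperFT_le {R M : ℝ} (hR : 0 ≤ R) (hφ : Continuous φ)
    (hz : ∀ ξ ∉ sqIcc R, φ ξ = 0) (hb : ∀ ξ, ‖φ ξ‖ ≤ M) (α : ℕ × ℕ) (ξ : ℝ × ℝ) :
    ‖mderiv2 α (paperFT φ) ξ‖ ≤ R ^ (α.1 + α.2) * M * (R / π) ^ 2 := by
  rw [paperFT_eq_synth_comp_neg]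
  have hπ : ‖1 / (4 * (π : ℂ) ^ 2)‖ = 1 / (4 * π ^ 2) := by simp [abs_of_pos Real.pi_pos]
  refine (norm_mderiv2_synth_le (M := 1 / (4 * π ^ 2) * M) hR (by fun_prop) (fun x hx => ?_)
    (fun x => ?_) α ξ).trans_eq (by field_simp; ring)
  · rw [hz (-x) (by simpa only [mem_sqIcc, norm_neg] using hx), mul_zero]
  · rw [norm_mul, hπ]
    gcongr
    exact hb _

end CompactlySupportedDensity

lemma isCompact_unitSq : IsCompact unitSq := isCompact_Icc

lemma supOn_nonneg (h : ℝ × ℝ → ℂ) (S : Set (ℝ × ℝ)) : 0 ≤ supOn h S :=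
  Real.iSup_nonneg fun _ => norm_nonneg _

lemma norm_le_supOn {h : ℝ × ℝ → ℂ} {S : Set (ℝ × ℝ)} (hS : IsCompact S) (hh : ContinuousOn h S)
    {z : ℝ × ℝ} (hz : z ∈ S) : ‖h z‖ ≤ supOn h S := by
  have hbdd := (hS.image_of_continuousOn hh.norm).bddAbove
  rw [image_eq_range] at hbdd
  exact le_ciSup hbdd ⟨z, hz⟩

lemma exists_boundedContinuousFunction_extension {h : ℝ × ℝ → ℂ} {S : Set (ℝ × ℝ)}
    (hS : IsCompact S) (hh : ContinuousOn h S) :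
    ∃ H : BoundedContinuousFunction (ℝ × ℝ) ℂ, (∀ x, ‖H x‖ ≤ supOn h S) ∧ ∀ z ∈ S, H z = h z := by
  have : CompactSpace S := isCompact_iff_compactSpace.mp hS
  let f : BoundedContinuousFunction S ℂ := .mkOfCompact ⟨S.domRestrict h, hh.domRestrict⟩
  obtain ⟨H, hnorm, hext⟩ := BoundedContinuousFunction.exists_norm_eq_domRestrict_eq hS.isClosed ℂ f
  refine ⟨H, fun x => ?_, fun z hz => DFunLike.congr_fun hext ⟨z, hz⟩⟩
  calc ‖H x‖ ≤ ‖f‖ := hnorm ▸ H.norm_coe_le_norm x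
    _ ≤ supOn h S := (f.norm_le (supOn_nonneg h S)).2 fun z => norm_le_supOn hS hh z.2

/-- Extend, cut off continuously outside `[-2,2]²`, and only then mollify. -/
lemma exists_schwartzMap_norm_sub_le {h : ℝ × ℝ → ℂ} (hh : ContinuousOn h unitSq) {τ : ℝ}
    (hτ : 0 < τ) :
    ∃ H : 𝓢(ℝ × ℝ, ℂ), (∀ x ∉ sqIcc 2, H x = 0) ∧ (∀ x, ‖H x‖ ≤ supOn h unitSq + τ) ∧
      ∀ z ∈ unitSq, ‖H z - h z‖ ≤ τ := by
  obtain ⟨H₀, hH₀, hext⟩ := exists_boundedContinuousFunction_extension isCompact_unitSq hh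
  let χ : ℝ × ℝ → ℝ := fun x => max 0 (min 1 (2 - ‖x‖))
  have hχ1 (x) : ‖χ x‖ ≤ 1 := by
    rw [Real.norm_of_nonneg (le_max_left _ _)]
    exact max_le zero_le_one (min_le_left _ _)
  have hχc : Continuous fun x => χ x • H₀ x := by
    have := H₀.continuous
    fun_prop
  obtain ⟨H, hHs, hHd, hHsupp⟩ :=
    hχc.exists_contDiff_approx ⊤ (continuous_const (y := τ)) fun _ => hτ
  have hd (x) : ‖H x - χ x • H₀ x‖ ≤ τ := (dist_eq_norm _ _).symm.trans_le (hHd x).le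
  have hz : ∀ x ∉ sqIcc 2, H x = 0 := fun x hx => by
    have hχ0 : χ x = 0 :=
      max_eq_left ((min_le_right _ _).trans (by linarith [not_le.1 (mem_sqIcc.not.1 hx)]))
    exact Function.notMem_support.1 fun hxs => hHsupp hxs (by simp only [hχ0, zero_smul])
  refine ⟨(HasCompactSupport.intro (isCompact_sqIcc 2) hz).toSchwartzMap hHs, hz, fun x => ?_,
    fun z hzQ => ?_⟩
  · calc ‖H x‖ = ‖χ x • H₀ x + (H x - χ x • H₀ x)‖ := by rw [add_sub_cancel]
      _ ≤ supOn h unitSq + τ := norm_add_le_of_le ?_ (hd x)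
    rw [norm_smul]
    exact (mul_le_of_le_one_left (norm_nonneg _) (hχ1 x)).trans (hH₀ x)
  · have hχz : χ z = 1 := by
      have := mem_unitSq.1 hzQ
      simp only [χ, min_eq_left (by linarith : 1 ≤ 2 - ‖z‖), max_eq_right zero_le_one]
    have := hd z
    rwa [hχz, one_smul, hext z hzQ] at this

lemma isBandlimitedApprox_zero {h : ℝ × ℝ → ℂ} (h0 : ∀ z ∈ unitSq, h z = 0) {ε : ℝ} (hε : 0 ≤ ε)
    (c : ℝ) : IsBandlimitedApprox unitSq h ε c 0 := by
  have hS := supOn_nonneg h unitSq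
  have hFT : paperFT ⇑(0 : 𝓢(ℝ × ℝ, ℂ)) = ⇑(0 : 𝓢(ℝ × ℝ, ℂ)) := by
    rw [← coe_paperFTEquiv, map_zero]
  refine ⟨fun ξ _ => by rw [hFT]; rfl, fun z hz => ?_, fun z => ?_, fun α _ ξ => ?_⟩
  · simpa [h0 z hz] using by positivity
  · simpa using hS
  · rw [hFT, ← coe_mderiv2CLM, map_zero]
    simpa using hS

lemma paperFT_synth (Φ : 𝓢(ℝ × ℝ, ℂ)) : paperFT (synth Φ) = Φ := by
  rw [← coe_paperFTEquiv_symm, ← coe_paperFTEquiv, ContinuousLinearEquiv.apply_symm_apply]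

section Perturbation

variable {h : ℝ × ℝ → ℂ} {H Φ : 𝓢(ℝ × ℝ, ℂ)} {ε τ c : ℝ}

lemma isBandlimitedApprox_paperFTEquiv_symm (hτε : τ + τ ≤ ε * supOn h unitSq)
    (hτS : τ + τ ≤ supOn h unitSq) (hHz : ∀ x ∉ sqIcc 2, H x = 0)
    (hHb : ∀ x, ‖H x‖ ≤ supOn h unitSq + τ) (hHd : ∀ z ∈ unitSq, ‖H z - h z‖ ≤ τ)
    (hΦz : ∀ ξ ∉ sqIcc c, Φ ξ = 0) (hΦs : ∀ x, ‖synth Φ x - H x‖ ≤ τ)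
    (hΦd : ∀ α : ℕ × ℕ, α.1 + α.2 ≤ 2 → ∀ ξ, ‖mderiv2 α Φ ξ - mderiv2 α (paperFT H) ξ‖ ≤ τ) :
    IsBandlimitedApprox unitSq h ε c (paperFTEquiv.symm Φ) := by
  simp only [IsBandlimitedApprox, coe_paperFTEquiv_symm, paperFT_synth]
  refine ⟨hΦz, fun z hz => ?_, fun z => ?_, fun α hα ξ => ?_⟩
  · calc ‖synth Φ z - h z‖ ≤ ‖synth Φ z - H z‖ + ‖H z - h z‖ := norm_sub_le_norm_sub_add_norm_sub ..
      _ ≤ ε * supOn h unitSq := by linarith [hΦs z, hHd z hz]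
  · calc ‖synth Φ z‖ ≤ ‖H z‖ + ‖synth Φ z - H z‖ := norm_le_norm_add_norm_sub' ..
      _ ≤ 3 * supOn h unitSq := by linarith [hΦs z, hHb z, supOn_nonneg h unitSq]
  · have hM : 0 ≤ supOn h unitSq + τ := (norm_nonneg _).trans (hHb 0)
    calc ‖mderiv2 α Φ ξ‖ ≤ ‖mderiv2 α (paperFT H) ξ‖ + ‖mderiv2 α Φ ξ - mderiv2 α (paperFT H) ξ‖ :=
        norm_le_norm_add_norm_sub' ..
      _ ≤ 2 ^ (α.1 + α.2) * (supOn h unitSq + τ) * (2 / π) ^ 2 + τ :=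
        add_le_add (norm_mderiv2_paperFT_le zero_le_two H.continuous hHz hHb α ξ) (hΦd α hα ξ)
      _ ≤ 2 ^ 2 * (supOn h unitSq + τ) * 1 ^ 2 + τ := by
        gcongr
        · exact one_le_two
        · rw [div_le_one Real.pi_pos]
          exact Real.two_le_pi
      _ ≤ 10 * supOn h unitSq := by linarith

end Perturbation

theorem exists_isBandlimitedApprox {h : ℝ × ℝ → ℂ} (hh : ContinuousOn h unitSq) {ε : ℝ}
    (hε : 0 < ε) : ∃ c, 0 < c ∧ ∃ fb, IsBandlimitedApprox unitSq h ε c fb := by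
  rcases (supOn_nonneg h unitSq).eq_or_lt with h0 | hS
  · exact ⟨1, one_pos, 0, isBandlimitedApprox_zero
      (fun z hz => norm_le_zero_iff.1 (h0 ▸ norm_le_supOn isCompact_unitSq hh hz)) hε.le 1⟩
  let τ := min ε 1 * supOn h unitSq / 2
  have hτ : 0 < τ := by positivity
  have hττ : τ + τ = min ε 1 * supOn h unitSq := add_halves _
  obtain ⟨H, hHz, hHb, hHd⟩ := exists_schwartzMap_norm_sub_le hh hτ
  obtain ⟨Φ, hΦc, hΦs, hΦd⟩ := exists_hasCompactSupport_near (paperFTEquiv H) hτ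
  rw [coe_paperFTEquiv, synth_paperFT] at hΦs
  rw [coe_paperFTEquiv] at hΦd
  obtain ⟨c, hc⟩ := hΦc.isCompact.isBounded.exists_norm_le
  refine ⟨max c 1, by positivity, paperFTEquiv.symm Φ, isBandlimitedApprox_paperFTEquiv_symm
    ?_ ?_ hHz hHb hHd (fun ξ hξ => ?_) (fun x => (hΦs x).le) fun α hα ξ => (hΦd α hα ξ).le⟩
  · rw [hττ]
    gcongr
    exact min_le_left _ _
  · rw [hττ]
    exact mul_le_of_le_one_left hS.le (min_le_right _ _)
  · exact image_eq_zero_of_notMem_tsupport fun hξΦ =>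
      hξ (mem_sqIcc.2 ((hc ξ hξΦ).trans (le_max_left c 1)))

lemma bandlimitConst_nonneg (Ω : Set (ℝ × ℝ)) (h : ℝ × ℝ → ℂ) (ε : ℝ) :
    0 ≤ bandlimitConst Ω h ε :=
  Real.sInf_nonneg fun _ hc => hc.1.le

lemma lipschitzWith_of_norm_pd_le {F : ℝ × ℝ → ℂ} {M : ℝ≥0} (hF : Differentiable ℝ F)
    (h1 : ∀ z, ‖pd1 F z‖ ≤ M) (h2 : ∀ z, ‖pd2 F z‖ ≤ M) : LipschitzWith (2 * M) F := by
  refine lipschitzWith_of_nnnorm_fderiv_le hF fun z => ?_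
  refine ContinuousLinearMap.opNorm_le_bound _ (2 * M).2 fun v => ?_
  have hv : fderiv ℝ F z v = v.1 • pd1 F z + v.2 • pd2 F z := by
    rw [pd1, pd2, ← map_smul, ← map_smul, ← map_add]
    simp
  calc ‖fderiv ℝ F z v‖ ≤ ‖v.1‖ * ‖pd1 F z‖ + ‖v.2‖ * ‖pd2 F z‖ := by
        rw [hv, ← norm_smul, ← norm_smul]
        exact norm_add_le _ _
    _ ≤ ‖v‖ * M + ‖v‖ * M := by
        gcongr
        exacts [norm_fst_le v, h1 z, norm_snd_le v, h2 z]
    _ = ↑(2 * M) * ‖v‖ := by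
        push_cast
        ring

lemma exists_subseq_tendsto_of_lipschitzWith {X E : Type*} [PseudoMetricSpace X]
    [NormedAddCommGroup E] [ProperSpace E] {K : Set X} (hK : IsCompact K) {u : ℕ → X → E} {M : ℝ}
    {C : ℝ≥0} (hM : ∀ k x, ‖u k x‖ ≤ M) (hC : ∀ k, LipschitzWith C (u k))
    (hu : ∀ k, ∀ x ∉ K, u k x = 0) :
    ∃ (v : X → E) (s : ℕ → ℕ), StrictMono s ∧
      ∀ x, Tendsto (fun j => u (s j) x) atTop (𝓝 (v x)) := by
  have : CompactSpace K := isCompact_iff_compactSpace.mp hK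
  let F (k : ℕ) : BoundedContinuousFunction K E :=
    .mkOfCompact ⟨K.domRestrict (u k), (hC k).continuous.comp continuous_subtype_val⟩
  have hequi : Equicontinuous ((↑) : range F → K → E) := by
    refine (LipschitzWith.uniformEquicontinuous _ C ?_).equicontinuous
    rintro ⟨_, k, rfl⟩
    exact mul_one C ▸ (hC k).comp (LipschitzWith.subtype_val K)
  have hcomp : IsCompact (closure (range F)) :=
    BoundedContinuousFunction.arzela_ascoli _ (isCompact_closedBall 0 M) _
      (by rintro _ x ⟨k, rfl⟩; exact mem_closedBall_zero_iff.2 (hM k x)) hequi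
  obtain ⟨v, -, s, hs, hlim⟩ := hcomp.tendsto_subseq fun k => subset_closure (mem_range_self k)
  have hv (x : K) : Tendsto (fun j => u (s j) x) atTop (𝓝 (v x)) :=
    (BoundedContinuousFunction.tendsto_iff_tendstoUniformly.1 hlim).tendsto_at x
  have hex (x : X) : ∃ y, Tendsto (fun j => u (s j) x) atTop (𝓝 y) := by
    by_cases hx : x ∈ K
    · exact ⟨_, hv ⟨x, hx⟩⟩
    · exact ⟨0, by simp only [hu _ x hx, tendsto_const_nhds]⟩
  choose w hw using hex
  exact ⟨w, s, hs, hw⟩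

section Limit

variable {u : ℕ → ℝ × ℝ → ℂ} {γ : ℝ × ℝ → ℂ}

lemma eq_zero_of_tendsto_of_notMem_sqIcc {b : ℕ → ℝ} {c : ℝ} (hb : Tendsto b atTop (𝓝 c))
    (hub : ∀ k, ∀ ξ ∉ sqIcc (b k), u k ξ = 0) (hlim : ∀ ξ, Tendsto (u · ξ) atTop (𝓝 (γ ξ))) :
    ∀ ξ ∉ sqIcc c, γ ξ = 0 := by
  intro ξ hξ
  refine tendsto_nhds_unique (hlim ξ) (tendsto_const_nhds.congr' ?_)
  filter_upwards [hb.eventually_lt_const (not_le.1 (mem_sqIcc.not.1 hξ))] with k hk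
  exact (hub k ξ fun h => (mem_sqIcc.1 h).not_gt hk).symm

lemma tendsto_synth {d M : ℝ} (hu : ∀ k, Continuous (u k)) (hM : ∀ k ξ, ‖u k ξ‖ ≤ M)
    (hud : ∀ k, ∀ ξ ∉ sqIcc d, u k ξ = 0) (hlim : ∀ ξ, Tendsto (u · ξ) atTop (𝓝 (γ ξ)))
    (z : ℝ × ℝ) : Tendsto (fun k => synth (u k) z) atTop (𝓝 (synth γ z)) := by
  have hint : Integrable ((sqIcc d).indicator fun _ => M) :=
    (integrable_indicator_iff measurableSet_Icc).2
      (integrableOn_const (isCompact_sqIcc d).measure_lt_top.ne)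
  refine tendsto_integral_of_dominated_convergence _ (fun k => ?_) hint
    (fun k => .of_forall fun ξ => ?_) (.of_forall fun ξ => (hlim ξ).mul_const _)
  · have := hu k
    fun_prop
  · rw [norm_mul, norm_planeWave, mul_one]
    by_cases hξ : ξ ∈ sqIcc d
    · rw [indicator_of_mem hξ]
      exact hM k ξ
    · rw [indicator_of_notMem hξ, hud k ξ hξ, norm_zero]

end Limit

section Approximants

variable {h : ℝ × ℝ → ℂ} {ε : ℝ}

lemma IsBandlimitedApprox.lipschitzWith_paperFT {Ω : Set (ℝ × ℝ)} {c : ℝ} {fb : 𝓢(ℝ × ℝ, ℂ)}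
    (hfb : IsBandlimitedApprox Ω h ε c fb) :
    LipschitzWith (2 * (10 * supOn h Ω).toNNReal) (paperFT fb) := by
  have hM : 10 * supOn h Ω ≤ (10 * supOn h Ω).toNNReal := Real.le_coe_toNNReal _
  rw [← coe_paperFTEquiv]
  refine lipschitzWith_of_norm_pd_le (paperFTEquiv fb).differentiable (fun ξ => ?_) fun ξ => ?_
  all_goals rw [coe_paperFTEquiv]
  · exact (hfb.2.2.2 (1, 0) one_le_two ξ).trans hM
  · exact (hfb.2.2.2 (0, 1) one_le_two ξ).trans hM

lemma exists_seq_isBandlimitedApprox (hh : ContinuousOn h unitSq) (hε : 0 < ε) :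
    ∃ (b : ℕ → ℝ) (fb : ℕ → 𝓢(ℝ × ℝ, ℂ)), Antitone b ∧
      Tendsto b atTop (𝓝 (bandlimitConst unitSq h ε)) ∧
      ∀ k, IsBandlimitedApprox unitSq h ε (b k) (fb k) := by
  obtain ⟨b, hb, hlim, hmem⟩ :=
    exists_seq_tendsto_sInf (exists_isBandlimitedApprox hh hε) ⟨0, fun _ hc => hc.1.le⟩
  choose fb hfb using fun k => (hmem k).2
  exact ⟨b, fb, hb, hlim, hfb⟩

/-- A limit of approximants may lose the smoothness of the spectral densities, but not their common
Lipschitz constant; in exchange its bandlimit is the infimum itself. -/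
theorem exists_lipschitzWith_synth_approx (hh : ContinuousOn h unitSq) (hε : 0 < ε) :
    ∃ (γ : ℝ × ℝ → ℂ) (C : ℝ≥0), LipschitzWith C γ ∧
      (∀ ξ ∉ sqIcc (bandlimitConst unitSq h ε), γ ξ = 0) ∧
      ∀ z ∈ unitSq, ‖synth γ z - h z‖ ≤ ε * supOn h unitSq := by
  obtain ⟨b, fb, hb, hbc, hfb⟩ := exists_seq_isBandlimitedApprox hh hε
  have hLip (k) := (hfb k).lipschitzWith_paperFT
  have hM (k ξ) : ‖paperFT (fb k) ξ‖ ≤ 10 * supOn h unitSq := (hfb k).2.2.2 (0, 0) zero_le_two ξ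
  have hb0 (k) : ∀ ξ ∉ sqIcc (b 0), paperFT (fb k) ξ = 0 := fun ξ hξ => (hfb k).1 ξ fun hk =>
    hξ (mem_sqIcc.2 ((mem_sqIcc.1 hk).trans (hb k.zero_le)))
  obtain ⟨γ, s, hs, hlim⟩ :=
    exists_subseq_tendsto_of_lipschitzWith (isCompact_sqIcc (b 0)) hM hLip hb0
  have hγ := (isClosed_setOfPred_lipschitzWith _).mem_of_tendsto (tendsto_pi_nhds.2 hlim)
    (.of_forall fun k => hLip (s k))
  refine ⟨γ, _, hγ, eq_zero_of_tendsto_of_notMem_sqIcc (hbc.comp hs.tendsto_atTop)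
    (fun k => (hfb (s k)).1) hlim, fun z hz => ?_⟩
  have hsynth := tendsto_synth (fun k => (hLip (s k)).continuous) (fun k => hM (s k))
    (fun k => hb0 (s k)) hlim z
  refine le_of_tendsto (hsynth.sub_const (h z)).norm (.of_forall fun k => ?_)
  rw [synth_paperFT]
  exact (hfb (s k)).2.1 z hz

end Approximants

lemma norm_le_two_mul_supOn {h W : ℝ × ℝ → ℂ} {S : Set (ℝ × ℝ)} {ε : ℝ} (hS : IsCompact S)
    (hh : ContinuousOn h S) (hε : ε ≤ 1) (hW : ∀ z ∈ S, ‖W z - h z‖ ≤ ε * supOn h S) :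
    ∀ z ∈ S, ‖W z‖ ≤ 2 * supOn h S := fun z hz => calc
  ‖W z‖ ≤ ‖h z‖ + ‖W z - h z‖ := norm_le_norm_add_norm_sub' ..
  _ ≤ supOn h S + 1 * supOn h S := by
    gcongr
    · exact norm_le_supOn hS hh hz
    · exact (hW z hz).trans (by gcongr; exact supOn_nonneg h S)
  _ = 2 * supOn h S := by ring

lemma norm_levin_residual_le {F V f a : ℝ × ℝ → ℂ} {A q δ η : ℝ} (hFs : ContDiff ℝ ∞ F)
    (hVs : ContDiff ℝ ∞ V) (hF : ∀ z ∈ unitSq, ‖F z‖ ≤ A) (hV : ∀ z ∈ unitSq, ‖V z‖ ≤ q)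
    (hq : q < 1) (hFf : ∀ z ∈ unitSq, ‖F z - f z‖ ≤ δ) (hVa : ∀ z ∈ unitSq, ‖V z - a z‖ ≤ η)
    (n : ℕ) : ∀ z ∈ unitSq,
      ‖levinSum F V n z + Complex.I * a z * xPrimitive (levinSum F V n) z - f z‖ ≤
        δ + A * q ^ (n + 1) + η * (A / (1 - q)) := by
  intro z hz
  have hsplit : levinSum F V n z + Complex.I * a z * xPrimitive (levinSum F V n) z - f z =
      F z - f z - levinTerm F V (n + 1) z -
        Complex.I * (V z - a z) * xPrimitive (levinSum F V n) z := by
    linear_combination levinSum_add_mul_xPrimitive hFs hVs n z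
  have hp := norm_xPrimitive_le_of_unitSq (norm_levinSum_le hF hV hq n) z hz
  rw [hsplit]
  refine norm_sub_le_of_le (norm_sub_le_of_le (hFf z hz) (norm_levinTerm_le hF hV _ z hz)) ?_
  rw [norm_mul, norm_mul, Complex.norm_I, one_mul]
  exact mul_le_mul (hVa z hz) hp (norm_nonneg _) ((norm_nonneg _).trans (hVa z hz))

theorem levin_pde_low_frequency_general {f a : ℝ × ℝ → ℂ} (hf : ContinuousOn f unitSq)
    (ha : ContinuousOn a unitSq) {G ε : ℝ} (hG : supOn a unitSq = G) (hG2 : G < 1 / 2)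
    (hε0 : 0 < ε) (hε1 : ε ≤ 1) {n : ℕ} (hn : (2 * G) ^ (n + 1) ≤ ε) :
    ∃ p : ℝ × ℝ → ℂ,
      ContDiff ℝ ∞ p ∧ PolyGrowth p ∧ funcOrderAtMost (ftFunctional p) 1 ∧
      funcSupport (ftFunctional p) ⊆
        sqIcc (bandlimitConst unitSq f ε + n * bandlimitConst unitSq a ε) ∧
      (∀ z ∈ unitSq, ‖pd1 p z + Complex.I * a z * p z - f z‖ ≤
        3 * ε * (1 + G / (1 - 2 * G)) * supOn f unitSq) ∧
      (∀ z ∈ unitSq, ‖p z‖ ≤ 2 / (1 - 2 * G) * supOn f unitSq) ∧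
      (∀ z ∈ unitSq, ‖pd1 p z‖ ≤ 4 * (1 + G / (1 - 2 * G)) * supOn f unitSq) := by
  obtain ⟨φ, C, hφ, hφc, hφf⟩ := exists_lipschitzWith_synth_approx hf hε0
  obtain ⟨γ, C', hγ, hγd, hγa⟩ := exists_lipschitzWith_synth_approx ha hε0
  have hS := supOn_nonneg f unitSq
  have hG0 : 0 ≤ G := hG ▸ supOn_nonneg a unitSq
  have hD : 0 < 1 - 2 * G := by linarith
  have hF := norm_le_two_mul_supOn isCompact_unitSq hf hε1 hφf
  have hV := norm_le_two_mul_supOn isCompact_unitSq ha hε1 hγa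
  rw [hG] at hγa hV
  have hφB : IsBandlimited _ (synth φ) :=
    ⟨φ, integrable_of_lipschitzWith_of_eq_zero hφ hφc, hφc, rfl⟩
  have hγB : IsBandlimited _ (synth γ) :=
    ⟨γ, integrable_of_lipschitzWith_of_eq_zero hγ hγd, hγd, rfl⟩
  have hW := isBandlimited_levinSum hφB hγ (bandlimitConst_nonneg _ _ _) hγd n
  have hWle : ∀ z ∈ unitSq, ‖levinSum (synth φ) (synth γ) n z‖ ≤
      2 / (1 - 2 * G) * supOn f unitSq := fun z hz =>
    (norm_levinSum_le hF hV (sub_pos.1 hD) n z hz).trans_eq (by ring)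
  refine ⟨_, contDiff_xPrimitive hW.contDiff, hW.polyGrowth_xPrimitive,
    hW.funcOrderAtMost_ftFunctional_xPrimitive, hW.funcSupport_ftFunctional_xPrimitive_subset,
    fun z hz => ?_, norm_xPrimitive_le_of_unitSq hWle, fun z hz => ?_⟩
  all_goals rw [pd1_xPrimitive_levinSum hφB.contDiff hγB.contDiff]
  · calc _ ≤ ε * supOn f unitSq + 2 * supOn f unitSq * (2 * G) ^ (n + 1) +
          ε * G * (2 * supOn f unitSq / (1 - 2 * G)) :=
        norm_levin_residual_le hφB.contDiff hγB.contDiff hF hV (sub_pos.1 hD) hφf hγa n z hz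
      _ ≤ ε * supOn f unitSq + 2 * supOn f unitSq * ε +
          ε * G * (3 * supOn f unitSq / (1 - 2 * G)) := by
        gcongr
        norm_num
      _ = 3 * ε * (1 + G / (1 - 2 * G)) * supOn f unitSq := by ring
  · have hconst : 2 / (1 - 2 * G) ≤ 4 * (1 + G / (1 - 2 * G)) := by
      rw [one_add_div hD.ne', ← mul_div_assoc]
      gcongr
      linarith
    exact (hWle z hz).trans (by gcongr)

lemma supOn_eq_of_isGreatest {h : ℝ × ℝ → ℂ} {S : Set (ℝ × ℝ)} {G : ℝ}
    (hG : IsGreatest {r | ∃ z ∈ S, r = ‖h z‖} G) : supOn h S = G := by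
  rw [← hG.csSup_eq, supOn, iSup]
  congr 1
  ext r
  simp [eq_comm]

lemma exists_floor_log_div_log_eq {q ε : ℝ} (hq0 : 0 < q) (hq1 : q < 1) (hε0 : 0 < ε)
    (hε1 : ε ≤ 1) : ∃ m : ℕ, ⌊Real.log ε / Real.log q⌋ = m ∧ q ^ (m + 1) ≤ ε := by
  have hlogq : Real.log q < 0 := Real.log_neg hq0 hq1
  have hnonneg : 0 ≤ Real.log ε / Real.log q :=
    div_nonneg_of_nonpos (Real.log_nonpos hε0.le hε1) hlogq.le
  refine ⟨⌊Real.log ε / Real.log q⌋₊, (Int.natCast_floor_eq_floor hnonneg).symm, ?_⟩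
  rw [← Real.log_le_log_iff (by positivity) hε0, Real.log_pow, Nat.cast_add_one,
    ← div_le_iff_of_neg hlogq]
  exact (Nat.lt_floor_add_one _).le

/-- Existence of a slowly-varying approximate solution to the Levin
equation `p_x + i g_x p = f` when `g_x` is of small magnitude (Theorem 12, leveq:thmlow). -/
theorem levin_pde_low_frequency
    (f : ℝ × ℝ → ℂ) (g : ℝ × ℝ → ℝ) (U : Set (ℝ × ℝ))
    (hUopen : IsOpen U) (hQU : unitSq ⊆ U)
    (hfsm : ContDiffOn ℝ (⊤ : ℕ∞) f U) (hgsm : ContDiffOn ℝ (⊤ : ℕ∞) g U)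
    (gx : ℝ × ℝ → ℝ) (hgx : ∀ z : ℝ × ℝ, gx z = fderiv ℝ g z ((1 : ℝ), (0 : ℝ)))
    (G₁ : ℝ) (hG₁ : IsGreatest {r : ℝ | ∃ z ∈ unitSq, r = |gx z|} G₁)
    (hG₁lt : G₁ < 1 / 2) (hgnz : ∃ z ∈ unitSq, gx z ≠ 0)
    (ε : ℝ) (hε0 : 0 < ε) (hε1 : ε < 1)
    (n : ℤ) (hn : n = ⌊Real.log ε / Real.log (2 * G₁)⌋) :
    ∃ pb : ℝ × ℝ → ℂ,
      ContDiff ℝ (⊤ : ℕ∞) pb ∧ PolyGrowth pb ∧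
      funcOrderAtMost (ftFunctional pb) 1 ∧
      funcSupport (ftFunctional pb) ⊆
        sqIcc (bandlimitConst unitSq f ε +
          (n : ℝ) * bandlimitConst unitSq (fun z => (gx z : ℂ)) ε) ∧
      (∀ z ∈ unitSq,
        ‖pd1 pb z + Complex.I * (gx z : ℂ) * pb z - f z‖ ≤
          3 * ε * (1 + G₁ / (1 - 2 * G₁)) * supOn f unitSq) ∧
      (∀ z ∈ unitSq, ‖pb z‖ ≤ 2 / (1 - 2 * G₁) * supOn f unitSq) ∧
      (∀ z ∈ unitSq, ‖pd1 pb z‖ ≤ 4 * (1 + G₁ / (1 - 2 * G₁)) * supOn f unitSq) := by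
  have hgx_cont : ContinuousOn (fun z => (gx z : ℂ)) unitSq := by
    simp only [hgx]
    have hfderiv := hgsm.continuousOn_fderiv_of_isOpen hUopen (by simp)
    exact Complex.continuous_ofReal.comp_continuousOn
      ((hfderiv.mono hQU).clm_apply continuousOn_const)
  have hsup : supOn (fun z => (gx z : ℂ)) unitSq = G₁ :=
    supOn_eq_of_isGreatest (by simpa only [Complex.norm_real, Real.norm_eq_abs] using hG₁)
  have hG₁pos : 0 < G₁ := by
    obtain ⟨z, hz, hgz⟩ := hgnz
    exact (abs_pos.2 hgz).trans_le (hG₁.2 ⟨z, hz, rfl⟩)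
  obtain ⟨m, hm, hpow⟩ := exists_floor_log_div_log_eq (q := 2 * G₁) (by linarith) (by linarith)
    hε0 hε1.le
  rw [hn, hm]
  exact levin_pde_low_frequency_general (hfsm.continuousOn.mono hQU) hgx_cont hsup hG₁lt hε0
    hε1.le hpow
end
end
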